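/- Let E ⊆ 𝕋 be a closed set of Lebesgue measure zero and let ω : (0,π] → (0,∞) be continuous and increasing, with t ↦ ω(t^γ) concave for some γ > 2 and t ↦ tω'(t)/ω(t) increasing, with log ω(dist(·,E)) ∈ L¹(𝕋). Then: (1) if E is an 𝓛₁-set and α ∈ (0,1/2) and ∫_𝕋 dist(ζ,E)^{2α−1} log(1/dist(ζ,E)) |dζ| < ∞, then f_{α,E} is a multiplier of 𝒟; (2) if E is an 𝓛₂-set and ∫_𝕋 dist(ζ,E) ω'(dist(ζ,E))² log(1/dist(ζ,E)) |dζ| < ∞, then f_{ω,E} is a multiplier of 𝒟. -/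

import Mathlib

open MeasureTheory Real Set

noncomputable section

/-- The unit circle in `ℂ`. -/
def circleT : Set ℂ := Metric.sphere (0 : ℂ) 1

/-- Arc-length parametrization of the unit circle. -/
def cpt (θ : ℝ) : ℂ := Complex.exp (θ * Complex.I)

/-- Distance from a point to a set. -/
def dE (E : Set ℂ) (ζ : ℂ) : ℝ := Metric.infDist ζ E

/-- Arc-length integral over the whole circle. -/
def circInt (f : ℂ → ℝ) : ℝ := ∫ θ in Set.Ioc 0 (2 * π), f (cpt θ)

/-- Arc-length integral over a subset `Λ` of the circle. -/
def circIntOn (Λ : Set ℂ) (f : ℂ → ℝ) : ℝ :=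
  ∫ θ in {θ ∈ Set.Ioc 0 (2 * π) | cpt θ ∈ Λ}, f (cpt θ)

/-- `E` has arc-length (Lebesgue) measure zero. -/
def MeasureZeroOnCircle (E : Set ℂ) : Prop :=
  volume {θ ∈ Set.Ioc 0 (2 * π) | cpt θ ∈ E} = 0

/-- `E` is a Carleson set: `∫_𝕋 log dist(ζ,E) |dζ| > -∞`. -/
def CarlesonSet (E : Set ℂ) : Prop :=
  IntegrableOn (fun θ => Real.log (dE E (cpt θ))) (Set.Ioc 0 (2 * π)) volume

/-- `I(ζ,E)`: the connected component of `𝕋 \ E` containing `ζ`. -/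
def compArc (E : Set ℂ) (ζ : ℂ) : Set ℂ := connectedComponentIn (circleT \ E) ζ

/-- `Γ(ζ,E)`. -/
def GammaSet (E : Set ℂ) (ζ : ℂ) : Set ℂ :=
  {ζ' ∈ circleT \ compArc E ζ | dE E ζ' ≤ dE E ζ}

/-- `Σ(ζ,E)`. -/
def SigmaSet (E : Set ℂ) (ζ : ℂ) : Set ℂ :=
  {ζ' ∈ circleT \ compArc E ζ | dE E ζ ≤ dE E ζ'}

/-- The Richter–Sundberg integrand for the outer function with boundary modulus
`ω(dist(·,E))`. -/
def RSker (ω : ℝ → ℝ) (E : Set ℂ) (ζ ζ' : ℂ) : ℝ :=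
  ((ω (dE E ζ')) ^ 2 - (ω (dE E ζ)) ^ 2
    - 2 * (ω (dE E ζ)) ^ 2 * Real.log (ω (dE E ζ') / ω (dE E ζ))) / ‖ζ - ζ'‖ ^ 2

/-- Local Dirichlet integral `D_ζ(f_{ω,E})` (Richter–Sundberg formula). -/
def locDir (ω : ℝ → ℝ) (E : Set ℂ) (ζ : ℂ) : ℝ :=
  (1 / (2 * π)) * circInt (fun ζ' => RSker ω E ζ ζ')

/-- Local Dirichlet integral restricted to `Λ`. -/
def locDirOn (ω : ℝ → ℝ) (E : Set ℂ) (Λ : Set ℂ) (ζ : ℂ) : ℝ :=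
  (1 / (2 * π)) * circIntOn Λ (fun ζ' => RSker ω E ζ ζ')

/-- `E` is an `𝓛₁`-set. -/
def L1Set (E : Set ℂ) : Prop :=
  ∃ C > 0, ∀ ζ ∈ circleT \ E,
    circIntOn (GammaSet E ζ)
      (fun ζ' => Real.log (dE E ζ / dE E ζ') / ‖ζ - ζ'‖ ^ 2) ≤ C / dE E ζ

/-- The `𝓛₂` inequality with constant `C`. -/
def L2With (E : Set ℂ) (C : ℝ) : Prop :=
  ∀ ζ ∈ circleT \ E,
    circIntOn (GammaSet E ζ)
      (fun ζ' => (Real.log (dE E ζ / dE E ζ')) ^ 2 / ‖ζ - ζ'‖ ^ 2) ≤ C / dE E ζ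

/-- `E` is an `𝓛₂`-set. -/
def L2Set (E : Set ℂ) : Prop := ∃ C > 0, L2With E C

/-- Supremum of `dist(·,E)` over the arc `cpt '' (a,b]`. -/
def arcSup (E : Set ℂ) (a b : ℝ) : ℝ := sSup ((fun θ => dE E (cpt θ)) '' Set.Ioc a b)

/-- `E` is a `𝒦`-set (Kotochigov). -/
def KSet (E : Set ℂ) : Prop :=
  ∃ c > 0, ∀ a b : ℝ, a < b → b ≤ a + 2 * π → c * (b - a) ≤ arcSup E a b

/-- Integral of a weight over the arc `cpt '' (a,b]` (with respect to arc length). -/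
def arcInt (w : ℂ → ℝ) (a b : ℝ) : ℝ := ∫ θ in Set.Ioc a b, w (cpt θ)

/-- Double logarithmic integral of a weight over an arc. -/
def arcDouble (w : ℂ → ℝ) (a b : ℝ) : ℝ :=
  ∫ θ in Set.Ioc a b, (∫ θ' in Set.Ioc a b,
    Real.log (1 / ‖cpt θ - cpt θ'‖) * w (cpt θ) * w (cpt θ'))

/-- Arc-length measure of `{ζ ∈ I : dist(ζ,E) ≤ t}` for the arc `cpt '' (a,b]`. -/
def sublevelMeas (E : Set ℂ) (a b t : ℝ) : ℝ :=
  (volume {θ ∈ Set.Ioc a b | dE E (cpt θ) ≤ t}).toReal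

/-- Arc-length measure of `E_t = {ζ ∈ 𝕋 : dist(ζ,E) ≤ t}`. -/
def EtMeas (E : Set ℂ) (t : ℝ) : ℝ := sublevelMeas E 0 (2 * π) t

/-- The open unit disc. -/
def unitDisc : Set ℂ := Metric.ball (0 : ℂ) 1

/-- Membership in the (holomorphic) Dirichlet space `𝒟`. -/
def MemDirichlet (f : ℂ → ℂ) : Prop :=
  DifferentiableOn ℂ f unitDisc ∧
  (∃ M : ℝ, ∀ r ∈ Set.Ioo (0 : ℝ) 1,
    (∫ θ in Set.Ioc 0 (2 * π), ‖f ((r : ℂ) * cpt θ)‖ ^ 2) ≤ M) ∧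
  IntegrableOn (fun z => ‖deriv f z‖ ^ 2) unitDisc volume

/-- `f` is a multiplier of the Dirichlet space `𝒟`. -/
def IsMultiplierD (f : ℂ → ℂ) : Prop :=
  ∀ g : ℂ → ℂ, MemDirichlet g → MemDirichlet (fun z => f z * g z)

/-- The outer function `f_{ω,E}` with boundary modulus `ω(dist(·,E))`. -/
def outerFun (ω : ℝ → ℝ) (E : Set ℂ) (z : ℂ) : ℂ :=
  Complex.exp ((((2 * π)⁻¹ : ℝ) : ℂ) * ∫ θ in Set.Ioc 0 (2 * π),
    ((cpt θ + z) / (cpt θ - z)) * ((Real.log (ω (dE E (cpt θ))) : ℝ) : ℂ))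

/-- `log ω(dist(·,E)) ∈ L¹(𝕋)`. -/
def LogOmegaInt (ω : ℝ → ℝ) (E : Set ℂ) : Prop :=
  IntegrableOn (fun θ => Real.log (ω (dE E (cpt θ)))) (Set.Ioc 0 (2 * π)) volume

/-- Standing hypotheses on `ω` (with derivative `ω'`): continuous, positive, increasing on
`(0,π]`, differentiable with derivative `ω'`, `t ↦ ω(t^γ)` concave, and `t ↦ tω'(t)/ω(t)`
increasing. -/
def OmegaHyp (ω ω' : ℝ → ℝ) (γ : ℝ) : Prop :=
  ContinuousOn ω (Set.Ioc 0 π) ∧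
  (∀ t ∈ Set.Ioc (0 : ℝ) π, 0 < ω t) ∧
  MonotoneOn ω (Set.Ioc 0 π) ∧
  (∀ t ∈ Set.Ioo (0 : ℝ) π, HasDerivAt ω (ω' t) t) ∧
  ConcaveOn ℝ (Set.Ioc 0 (π ^ γ⁻¹)) (fun t => ω (t ^ γ)) ∧
  MonotoneOn (fun t => t * ω' t / ω t) (Set.Ioo 0 π)

/-- The generalized Cantor set `E_{(ζ_n)}` (with `ξ k` playing the role of `ζ_{k+1}`). -/
def gCantorSet (ξ : ℕ → ℝ) : Set ℂ :=
  {z | ∃ ε : ℕ → Bool, z = Complex.exp (((2 * π : ℝ) : ℂ) * Complex.I *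
    ((∑' n : ℕ, (if ε n then (1 : ℝ) else 0) * (∏ k ∈ Finset.range n, ξ k) * (1 - ξ n) : ℝ) : ℂ))}

end

/-- The consequences of the standing hypotheses on `ω` that are used below; here
`q t = t ^ (1 - β) * ω' t`, which is decreasing because `t ↦ ω (t ^ β⁻¹)` is concave. -/
structure WeightBounds (ω q : ℝ → ℝ) (β : ℝ) : Prop where
  pos : ∀ t ∈ Ioo (0 : ℝ) π, 0 < ω t
  mono : MonotoneOn ω (Ioo 0 π)
  q_nonneg : ∀ t ∈ Ioo (0 : ℝ) π, 0 ≤ q t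
  q_anti : AntitoneOn q (Ioo 0 π)
  sub_le : ∀ x ∈ Ioo (0 : ℝ) π, ∀ y ∈ Ioo (0 : ℝ) π, x ≤ y →
    ω y - ω x ≤ β⁻¹ * q x * (y ^ β - x ^ β)
  log_le : ∀ x ∈ Ioo (0 : ℝ) π, ∀ y ∈ Ioo (0 : ℝ) π, x ≤ y →
    ω y * (Real.log (ω y) - Real.log (ω x)) ≤ q y * y ^ β * Real.log (y / x)
  q_le : ∀ x ∈ Ioo (0 : ℝ) π, q x * x ^ β ≤ β * ω x

theorem hasDerivAt_comp_rpow {ω : ℝ → ℝ} {a γ x : ℝ} (hγ : 0 < γ) (hx : 0 < x)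
    (h : HasDerivAt ω a x) :
    HasDerivAt (fun t => ω (t ^ γ)) (γ * (a * x ^ (1 - γ⁻¹))) (x ^ γ⁻¹) := by
  have hX : (x ^ γ⁻¹) ^ γ = x := rpow_inv_rpow hx.le hγ.ne'
  have h1 : HasDerivAt (fun t : ℝ => t ^ γ) (γ * (x ^ γ⁻¹) ^ (γ - 1)) (x ^ γ⁻¹) :=
    Real.hasDerivAt_rpow_const (Or.inl (rpow_pos_of_pos hx _).ne')
  have h2 : HasDerivAt ω a ((x ^ γ⁻¹) ^ γ) := by rwa [hX]
  have h3 := h2.comp (x ^ γ⁻¹) h1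
  have h4 : (x ^ γ⁻¹) ^ (γ - 1) = x ^ (1 - γ⁻¹) := by
    rw [← rpow_mul hx.le]
    congr 1
    field_simp
  rw [h4] at h3
  exact h3.congr_deriv (by ring)

theorem OmegaHyp.weightBounds {ω ω' : ℝ → ℝ} {γ : ℝ} (hγ : 2 < γ) (hω : OmegaHyp ω ω' γ) :
    WeightBounds ω (fun t => deriv ω t * t ^ (1 - γ⁻¹)) γ⁻¹ := by
  obtain ⟨-, hpos, hmono, hder, hconc, hratio⟩ := hω
  have hγ0 : 0 < γ := by linarith
  have hd : ∀ x ∈ Ioo (0 : ℝ) π, deriv ω x = ω' x := fun x hx => (hder x hx).deriv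
  have hsub : Ioo (0 : ℝ) π ⊆ Ioc 0 π := Ioo_subset_Ioc_self
  have hω'0 : ∀ x ∈ Ioo (0 : ℝ) π, 0 ≤ ω' x := by
    intro x hx
    rw [← hd x hx, ← derivWithin_of_mem_nhds (Ioo_mem_nhds hx.1 hx.2)]
    exact (hmono.mono hsub).derivWithin_nonneg
  have hmem : ∀ x ∈ Ioo (0 : ℝ) π, x ^ γ⁻¹ ∈ Ioc 0 (π ^ γ⁻¹) := fun x hx =>
    ⟨rpow_pos_of_pos hx.1 _, rpow_le_rpow hx.1.le hx.2.le (inv_pos.2 hγ0).le⟩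
  have hval : ∀ x : ℝ, 0 < x → ω ((x ^ γ⁻¹) ^ γ) = ω x := fun x hx => by
    rw [rpow_inv_rpow hx.le hγ0.ne']
  have hdh : ∀ x ∈ Ioo (0 : ℝ) π,
      HasDerivAt (fun t => ω (t ^ γ)) (γ * (ω' x * x ^ (1 - γ⁻¹))) (x ^ γ⁻¹) := fun x hx =>
    hasDerivAt_comp_rpow hγ0 hx.1 (hder x hx)
  have hlt : ∀ x y : ℝ, 0 < x → x < y → x ^ γ⁻¹ < y ^ γ⁻¹ := fun x y hx hxy =>
    rpow_lt_rpow hx.le hxy (inv_pos.2 hγ0)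
  have up : ∀ x ∈ Ioo (0 : ℝ) π, ∀ y ∈ Ioo (0 : ℝ) π, x < y →
      ω y - ω x ≤ γ * (ω' x * x ^ (1 - γ⁻¹)) * (y ^ γ⁻¹ - x ^ γ⁻¹) := by
    intro x hx y hy hxy
    have := hconc.slope_le_of_hasDerivAt (hmem x hx) (hmem y hy) (hlt x y hx.1 hxy) (hdh x hx)
    rw [slope_def_field, div_le_iff₀ (sub_pos.2 (hlt x y hx.1 hxy))] at this
    simpa only [hval x hx.1, hval y hy.1] using this
  have lo : ∀ x ∈ Ioo (0 : ℝ) π, ∀ y ∈ Ioo (0 : ℝ) π, x < y →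
      γ * (ω' y * y ^ (1 - γ⁻¹)) * (y ^ γ⁻¹ - x ^ γ⁻¹) ≤ ω y - ω x := by
    intro x hx y hy hxy
    have := hconc.le_slope_of_hasDerivAt (hmem x hx) (hmem y hy) (hlt x y hx.1 hxy) (hdh y hy)
    rw [slope_def_field, le_div_iff₀ (sub_pos.2 (hlt x y hx.1 hxy))] at this
    simpa only [hval x hx.1, hval y hy.1] using this
  refine ⟨fun t ht => hpos t (hsub ht), hmono.mono hsub, ?_, ?_, ?_, ?_, ?_⟩
  · intro t ht
    have := hω'0 t ht
    simp only [hd t ht]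
    have := ht.1
    positivity
  · intro x hx y hy hxy
    simp only [hd x hx, hd y hy]
    rcases hxy.eq_or_lt with rfl | hxy
    · exact le_rfl
    have h := (lo x hx y hy hxy).trans (up x hx y hy hxy)
    have h' := le_of_mul_le_mul_right h (sub_pos.2 (hlt x y hx.1 hxy))
    exact le_of_mul_le_mul_left h' hγ0
  · intro x hx y hy hxy
    simp only [hd x hx, inv_inv]
    rcases hxy.eq_or_lt with rfl | hxy
    · simp
    · exact up x hx y hy hxy
  · intro x hx y hy hxy
    have hωy := hpos y (hsub hy)
    have hyy : y ^ (1 - γ⁻¹) * y ^ γ⁻¹ = y := by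
      rw [← rpow_add hy.1]; simp
    simp only [hd y hy]
    rw [mul_assoc (ω' y), hyy, Real.log_div hy.1.ne' hx.1.ne']
    have hIcc : ∀ t ∈ Icc x y, t ∈ Ioo (0 : ℝ) π := fun t ht =>
      ⟨hx.1.trans_le ht.1, ht.2.trans_lt hy.2⟩
    have hder' : ∀ t ∈ Icc x y, HasDerivAt
        (fun t => Real.log (ω t) - y * ω' y / ω y * Real.log t)
        (ω' t / ω t - y * ω' y / ω y * t⁻¹) t := fun t ht =>
      ((hder t (hIcc t ht)).log (hpos t (hsub (hIcc t ht))).ne').sub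
        ((Real.hasDerivAt_log (hIcc t ht).1.ne').const_mul _)
    have hanti : AntitoneOn (fun t => Real.log (ω t) - y * ω' y / ω y * Real.log t) (Icc x y) := by
      refine antitoneOn_of_deriv_nonpos (convex_Icc x y)
        (fun t ht => (hder' t ht).continuousAt.continuousWithinAt) ?_ ?_
      · intro t ht
        exact (hder' t (interior_subset ht)).differentiableAt.differentiableWithinAt
      · intro t ht
        have ht := interior_subset ht
        rw [(hder' t ht).deriv]
        have hr := hratio (hIcc t ht) hy ht.2
        have ht0 := (hIcc t ht).1
        have : ω' t / ω t = t * ω' t / ω t * t⁻¹ := by field_simp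
        rw [this, ← sub_mul]
        exact mul_nonpos_of_nonpos_of_nonneg (sub_nonpos.2 hr) (inv_nonneg.2 ht0.le)
    have h := hanti (left_mem_Icc.2 hxy) (right_mem_Icc.2 hxy) hxy
    simp only at h
    have h2 : Real.log (ω y) - Real.log (ω x) ≤
        y * ω' y / ω y * (Real.log y - Real.log x) := by linarith
    calc ω y * (Real.log (ω y) - Real.log (ω x))
        ≤ ω y * (y * ω' y / ω y * (Real.log y - Real.log x)) :=
          mul_le_mul_of_nonneg_left h2 hωy.le
      _ = ω' y * y * (Real.log y - Real.log x) := by field_simp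
  · intro y hy
    simp only [hd y hy]
    have key : ∀ᶠ x in nhdsWithin (0 : ℝ) (Ioi 0),
        γ * (ω' y * y ^ (1 - γ⁻¹)) * (y ^ γ⁻¹ - x ^ γ⁻¹) ≤ ω y := by
      filter_upwards [Ioo_mem_nhdsGT hy.1] with x hx
      have hx' : x ∈ Ioo (0 : ℝ) π := ⟨hx.1, hx.2.trans hy.2⟩
      linarith [lo x hx' y hy hx.2, hpos x (hsub hx')]
    have lim : Filter.Tendsto (fun x : ℝ => γ * (ω' y * y ^ (1 - γ⁻¹)) * (y ^ γ⁻¹ - x ^ γ⁻¹))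
        (nhdsWithin 0 (Ioi 0)) (nhds (γ * (ω' y * y ^ (1 - γ⁻¹)) * (y ^ γ⁻¹ - 0))) := by
      refine (Filter.Tendsto.const_sub _ ?_).const_mul _
      have := (Real.continuousAt_rpow_const 0 γ⁻¹ (Or.inr (inv_pos.2 hγ0).le)).tendsto
      rw [zero_rpow (inv_pos.2 hγ0).ne'] at this
      exact this.mono_left nhdsWithin_le_nhds
    have h := le_of_tendsto lim key
    rw [inv_mul_eq_div, le_div_iff₀ hγ0]
    linarith

namespace WeightBounds

variable {ω q : ℝ → ℝ} {β : ℝ}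

theorem log_sub_log_le (h : WeightBounds ω q β) (hβ : 0 < β) {x y : ℝ}
    (hx : x ∈ Ioo (0 : ℝ) π) (hy : y ∈ Ioo (0 : ℝ) π) (hxy : x ≤ y) :
    Real.log (ω y) - Real.log (ω x) ≤ β * Real.log (y / x) := by
  have hωx := h.pos x hx
  have hωy := h.pos y hy
  have hxb := rpow_pos_of_pos hx.1 β
  have h1 : ω y ≤ ω x * (y / x) ^ β := by
    have h2 := h.sub_le x hx y hy hxy
    have h3 := h.q_le x hx
    have h4 : x ^ β ≤ y ^ β := rpow_le_rpow hx.1.le hxy hβ.le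
    rw [div_rpow hy.1.le hx.1.le]
    have h5 : β⁻¹ * q x ≤ ω x / x ^ β := by
      rw [le_div_iff₀ hxb, inv_mul_eq_div, div_mul_eq_mul_div, div_le_iff₀ hβ]
      linarith
    have h6 := mul_le_mul_of_nonneg_right h5 (sub_nonneg.2 h4)
    have h7 : ω x / x ^ β * (y ^ β - x ^ β) = ω x * (y ^ β / x ^ β) - ω x := by
      field_simp
    linarith
  have hyx : 0 < y / x := div_pos hy.1 hx.1
  have h2 := Real.log_le_log hωy h1
  rw [Real.log_mul hωx.ne' (rpow_pos_of_pos hyx _).ne', Real.log_rpow hyx] at h2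
  linarith

end WeightBounds

/-- The kernel dominating the squared increments of `log ω` at distance `τ`. -/
noncomputable def incrKernel (q : ℝ → ℝ) (η d τ : ℝ) : ℝ :=
  q d ^ 2 * d ^ (-η) * (d + τ) ^ (-1 - η)

theorem incrKernel_nonneg (q : ℝ → ℝ) (η : ℝ) {d τ : ℝ} (hd : 0 ≤ d) (hτ : 0 ≤ τ) :
    0 ≤ incrKernel q η d τ := by
  unfold incrKernel; positivity

theorem sq_mul_rpow_le_incrKernel {q : ℝ → ℝ} {β η d τ : ℝ} (hη : 0 < η) (hβη : 2 * β + 2 * η = 1)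
    (hd : 0 < d) (hτ : 0 ≤ τ) :
    (q d * ((d + τ) ^ (β - 1) * τ)) ^ 2 ≤ τ ^ 2 * incrKernel q η d τ := by
  have hdτ : 0 < d + τ := by linarith
  have h1 : ((d + τ) ^ (β - 1)) ^ 2 = (d + τ) ^ (-η) * (d + τ) ^ (-1 - η) := by
    rw [← rpow_natCast, ← rpow_mul hdτ.le, ← rpow_add hdτ]
    congr 1; push_cast; linarith
  have h2 : (d + τ) ^ (-η) ≤ d ^ (-η) :=
    rpow_le_rpow_of_nonpos hd (by linarith) (by linarith)
  have h3 : 0 ≤ (d + τ) ^ (-1 - η) := by positivity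
  calc (q d * ((d + τ) ^ (β - 1) * τ)) ^ 2
      = τ ^ 2 * (q d ^ 2 * ((d + τ) ^ (β - 1)) ^ 2) := by ring
    _ = τ ^ 2 * (q d ^ 2 * ((d + τ) ^ (-η) * (d + τ) ^ (-1 - η))) := by rw [h1]
    _ ≤ τ ^ 2 * (q d ^ 2 * (d ^ (-η) * (d + τ) ^ (-1 - η))) := by gcongr
    _ = τ ^ 2 * incrKernel q η d τ := by unfold incrKernel; ring

namespace WeightBounds

variable {ω q : ℝ → ℝ} {β η : ℝ}

theorem incr_above_le (h : WeightBounds ω q β) (hβ : 0 < β) (hη : 0 < η)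
    (hβη : 2 * β + 2 * η = 1) {d d' s t : ℝ} (hd : 0 < d) (hd'π : d' < π) (hs : 0 < s) (ht : 0 ≤ t)
    (hdd : d' ≤ d + t) (hle : d + s ≤ d') :
    (ω (d + s) * |Real.log (ω d') - Real.log (ω (d + s))|) ^ 2 ≤
      β⁻¹ ^ 2 * ((s + t) ^ 2 * incrKernel q η d (s + t)) := by
  have hδ : d + s ∈ Ioo (0 : ℝ) π := ⟨by linarith, by linarith⟩
  have hd' : d' ∈ Ioo (0 : ℝ) π := ⟨by linarith, hd'π⟩
  have hdm : d ∈ Ioo (0 : ℝ) π := ⟨hd, by linarith⟩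
  have hωδ := h.pos _ hδ
  have hωd := h.pos _ hd'
  have hmono := h.mono hδ hd' hle
  have hX : 0 < d + (s + t) := by linarith
  have h1 : ω (d + s) * |Real.log (ω d') - Real.log (ω (d + s))| ≤ ω d' - ω (d + s) := by
    rw [abs_of_nonneg (sub_nonneg.2 (Real.log_le_log hωδ hmono)),
      ← Real.log_div hωd.ne' hωδ.ne']
    have := Real.log_le_sub_one_of_pos (div_pos hωd hωδ)
    calc _ ≤ ω (d + s) * (ω d' / ω (d + s) - 1) := by gcongr
      _ = _ := by field_simp
  have h2 : d' ^ β - (d + s) ^ β ≤ (d + (s + t)) ^ (β - 1) * t := by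
    have h3 : d' ^ β ≤ (d + (s + t)) ^ β := rpow_le_rpow hd'.1.le (by linarith) hβ.le
    have h4 : (d + (s + t)) ^ (β - 1) * (d + s) ≤ (d + s) ^ β := by
      calc (d + (s + t)) ^ (β - 1) * (d + s) ≤ (d + s) ^ (β - 1) * (d + s) := by
            refine mul_le_mul_of_nonneg_right ?_ hδ.1.le
            exact rpow_le_rpow_of_nonpos hδ.1 (by linarith) (by linarith)
        _ = (d + s) ^ β := by rw [← rpow_add_one hδ.1.ne']; simp
    have h5 : (d + (s + t)) ^ β = (d + (s + t)) ^ (β - 1) * (d + (s + t)) := by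
      rw [← rpow_add_one hX.ne']; simp
    have h6 : (d + (s + t)) ^ (β - 1) * (d + (s + t)) - (d + (s + t)) ^ (β - 1) * (d + s) =
      (d + (s + t)) ^ (β - 1) * t := by ring
    linarith
  have h3 := h.sub_le _ hδ _ hd' hle
  have hq : q (d + s) ≤ q d := h.q_anti hdm hδ (by linarith)
  have hq0 := h.q_nonneg _ hδ
  have h7 : ω (d + s) * |Real.log (ω d') - Real.log (ω (d + s))| ≤
      β⁻¹ * (q d * ((d + (s + t)) ^ (β - 1) * (s + t))) := by
    calc _ ≤ β⁻¹ * q (d + s) * (d' ^ β - (d + s) ^ β) := h1.trans h3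
      _ ≤ β⁻¹ * q (d + s) * ((d + (s + t)) ^ (β - 1) * t) := by gcongr
      _ ≤ β⁻¹ * q d * ((d + (s + t)) ^ (β - 1) * (s + t)) := by
          have : (0 : ℝ) ≤ q d := hq0.trans hq
          gcongr
          linarith
      _ = _ := by ring
  calc _ ≤ (β⁻¹ * (q d * ((d + (s + t)) ^ (β - 1) * (s + t)))) ^ 2 := by gcongr
    _ = β⁻¹ ^ 2 * (q d * ((d + (s + t)) ^ (β - 1) * (s + t))) ^ 2 := by ring
    _ ≤ _ := by
      gcongr
      exact sq_mul_rpow_le_incrKernel hη hβη hd (by linarith)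

theorem incr_below_near_le (h : WeightBounds ω q β) (hβ : 0 < β) (hη : 0 < η)
    (hβη : 2 * β + 2 * η = 1) {d d' s t : ℝ} (hd : 0 < d) (hδπ : d + s < π) (hs : 0 < s)
    (ht : 0 ≤ t) (hdd : d - t ≤ d') (hle : d' ≤ d + s) (hst : s + t ≤ (d + s) / 2) :
    (ω (d + s) * |Real.log (ω d') - Real.log (ω (d + s))|) ^ 2 ≤
      16 * ((s + t) ^ 2 * incrKernel q η d (s + t)) := by
  have hδ : d + s ∈ Ioo (0 : ℝ) π := ⟨by linarith, by linarith⟩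
  have hd' : d' ∈ Ioo (0 : ℝ) π := ⟨by linarith, by linarith⟩
  have hdm : d ∈ Ioo (0 : ℝ) π := ⟨hd, by linarith⟩
  have hωd := h.pos _ hd'
  have hmono := h.mono hd' hδ hle
  have hX : 0 < d + (s + t) := by linarith
  have hωδ := h.pos _ hδ
  rw [abs_sub_comm, abs_of_nonneg (sub_nonneg.2 (Real.log_le_log hωd hmono))]
  have h1 := h.log_le _ hd' _ hδ hle
  have h2 : Real.log ((d + s) / d') ≤ 2 * (s + t) / (d + s) := by
    have := Real.log_le_sub_one_of_pos (div_pos hδ.1 hd'.1)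
    refine this.trans ?_
    have h3 : (d + s) / d' - 1 = (d + s - d') / d' := by
      rw [sub_div, div_self hd'.1.ne']
    rw [h3, div_le_div_iff₀ hd'.1 hδ.1]
    nlinarith [hδ.1, hd'.1]
  have hq : q (d + s) ≤ q d := h.q_anti hdm hδ (by linarith)
  have hq0 := h.q_nonneg _ hδ
  have h4 : (d + s) ^ (β - 1) ≤ 2 * (d + (s + t)) ^ (β - 1) := by
    have h5 : (d + s) ^ (β - 1) ≤ ((d + (s + t)) / 2) ^ (β - 1) :=
      rpow_le_rpow_of_nonpos (by linarith) (by linarith) (by linarith)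
    rw [div_rpow hX.le (by norm_num)] at h5
    have h6 : (2 : ℝ)⁻¹ ≤ 2 ^ (β - 1) := by
      rw [← rpow_neg_one]
      exact rpow_le_rpow_of_exponent_le (by norm_num) (by linarith)
    calc (d + s) ^ (β - 1) ≤ (d + (s + t)) ^ (β - 1) / 2 ^ (β - 1) := h5
      _ ≤ (d + (s + t)) ^ (β - 1) / 2⁻¹ := by gcongr
      _ = _ := by ring
  have h7 : ω (d + s) * (Real.log (ω (d + s)) - Real.log (ω d')) ≤
      4 * (q d * ((d + (s + t)) ^ (β - 1) * (s + t))) := by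
    calc _ ≤ q (d + s) * (d + s) ^ β * Real.log ((d + s) / d') := h1
      _ ≤ q (d + s) * (d + s) ^ β * (2 * (s + t) / (d + s)) := by
          have := hδ.1
          gcongr
      _ = q (d + s) * ((d + s) ^ (β - 1) * (2 * (s + t))) := by
          rw [rpow_sub_one hδ.1.ne']; ring
      _ ≤ q d * (2 * (d + (s + t)) ^ (β - 1) * (2 * (s + t))) := by
          have : (0 : ℝ) ≤ q d := hq0.trans hq
          gcongr
      _ = _ := by ring
  have h8 : 0 ≤ Real.log (ω (d + s)) - Real.log (ω d') :=
    sub_nonneg.2 (Real.log_le_log hωd hmono)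
  calc _ ≤ (4 * (q d * ((d + (s + t)) ^ (β - 1) * (s + t)))) ^ 2 := by gcongr
    _ = 16 * (q d * ((d + (s + t)) ^ (β - 1) * (s + t))) ^ 2 := by ring
    _ ≤ _ := by
      gcongr
      exact sq_mul_rpow_le_incrKernel hη hβη hd (by linarith)

theorem incr_below_far_le (h : WeightBounds ω q β) (hη : 0 < η)
    (hβη : 2 * β + 2 * η = 1) (hβ : 0 < β) {d d' s t : ℝ} (hd'0 : 0 < d') (hδπ : d + s < π)
    (hle : d' ≤ d + s) (hst : (d + s) / 2 < s + t) :
    (ω (d + s) * |Real.log (ω d') - Real.log (ω (d + s))|) ^ 2 ≤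
      72 / η ^ 2 * ((s + t) ^ 2 * incrKernel q η d' (s + t)) := by
  have hδ : d + s ∈ Ioo (0 : ℝ) π := ⟨by linarith, by linarith⟩
  have hd' : d' ∈ Ioo (0 : ℝ) π := ⟨by linarith, by linarith⟩
  have hωd := h.pos _ hd'
  have hmono := h.mono hd' hδ hle
  have hωδ := h.pos _ hδ
  rw [abs_sub_comm, abs_of_nonneg (sub_nonneg.2 (Real.log_le_log hωd hmono))]
  have h8 : 0 ≤ Real.log (ω (d + s)) - Real.log (ω d') :=
    sub_nonneg.2 (Real.log_le_log hωd hmono)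
  have h1 := h.log_le _ hd' _ hδ hle
  have hq : q (d + s) ≤ q d' := h.q_anti hd' hδ hle
  have hq0 := h.q_nonneg _ hδ
  have hq0' : 0 ≤ q d' := hq0.trans hq
  have hτ : 0 < s + t := by linarith [hδ.1]
  set δ := d + s
  set τ := s + t
  have h2 : Real.log (δ / d') ≤ (δ / d') ^ (η / 2) / (η / 2) :=
    Real.log_le_rpow_div (div_pos hδ.1 hd'.1).le (by linarith)
  have h3 : (δ ^ β * (δ / d') ^ (η / 2)) ^ 2 = δ ^ (1 - η) * d' ^ (-η) := by
    rw [div_rpow hδ.1.le hd'.1.le, rpow_neg hd'.1.le, mul_pow, div_pow, ← rpow_natCast,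
      ← rpow_natCast, ← rpow_natCast, ← rpow_mul hδ.1.le, ← rpow_mul hδ.1.le,
      ← rpow_mul hd'.1.le, div_eq_mul_inv, ← mul_assoc, ← rpow_add hδ.1]
    congr 2
    · push_cast; linarith
    · push_cast; congr 1; ring
  have h4 : δ ^ (1 - η) ≤ 18 * (τ ^ 2 * (d' + τ) ^ (-1 - η)) := by
    have h5 : δ ^ (1 - η) ≤ (2 * τ) ^ (1 - η) :=
      rpow_le_rpow hδ.1.le (by linarith) (by linarith)
    have h6 : (2 * τ) ^ (1 - η) ≤ 2 * τ ^ (1 - η) := by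
      rw [mul_rpow (by norm_num) hτ.le]
      gcongr
      calc (2 : ℝ) ^ (1 - η) ≤ 2 ^ (1 : ℝ) :=
            rpow_le_rpow_of_exponent_le (by norm_num) (by linarith)
        _ = 2 := rpow_one 2
    have h7 : τ ^ (1 - η) = τ ^ 2 * τ ^ (-1 - η) := by
      rw [← rpow_natCast, ← rpow_add hτ]; congr 1; push_cast; ring
    have h9 : τ ^ (-1 - η) ≤ 9 * (d' + τ) ^ (-1 - η) := by
      have h10 : τ ^ (-1 - η) ≤ ((d' + τ) / 3) ^ (-1 - η) :=
        rpow_le_rpow_of_nonpos (by linarith) (by linarith) (by linarith)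
      rw [div_rpow (by linarith) (by norm_num)] at h10
      have h11 : (9 : ℝ)⁻¹ ≤ 3 ^ (-1 - η) := by
        have : (9 : ℝ)⁻¹ = 3 ^ (-2 : ℝ) := by
          rw [rpow_neg (by norm_num)]; norm_num
        rw [this]
        exact rpow_le_rpow_of_exponent_le (by norm_num) (by linarith)
      have : 0 ≤ (d' + τ) ^ (-1 - η) := rpow_nonneg (by linarith) _
      calc _ ≤ (d' + τ) ^ (-1 - η) / 3 ^ (-1 - η) := h10
        _ ≤ (d' + τ) ^ (-1 - η) / 9⁻¹ := by gcongr
        _ = _ := by ring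
    calc _ ≤ 2 * τ ^ (1 - η) := h5.trans h6
      _ = 2 * (τ ^ 2 * τ ^ (-1 - η)) := by rw [h7]
      _ ≤ 2 * (τ ^ 2 * (9 * (d' + τ) ^ (-1 - η))) := by gcongr
      _ = _ := by ring
  have h5 : ω δ * (Real.log (ω δ) - Real.log (ω d')) ≤
      2 / η * (q d' * (δ ^ β * (δ / d') ^ (η / 2))) := by
    have := hδ.1
    have hlog : 0 ≤ Real.log (δ / d') := Real.log_nonneg ((one_le_div hd'.1).2 hle)
    calc _ ≤ q δ * δ ^ β * Real.log (δ / d') := h1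
      _ ≤ q d' * δ ^ β * ((δ / d') ^ (η / 2) / (η / 2)) := by gcongr
      _ = _ := by field_simp
  calc _ ≤ (2 / η * (q d' * (δ ^ β * (δ / d') ^ (η / 2)))) ^ 2 := by gcongr
    _ = 4 / η ^ 2 * (q d' ^ 2 * (δ ^ β * (δ / d') ^ (η / 2)) ^ 2) := by ring
    _ = 4 / η ^ 2 * (q d' ^ 2 * (δ ^ (1 - η) * d' ^ (-η))) := by rw [h3]
    _ ≤ 4 / η ^ 2 * (q d' ^ 2 * (18 * (τ ^ 2 * (d' + τ) ^ (-1 - η)) * d' ^ (-η))) := by gcongr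
    _ = _ := by unfold incrKernel; ring

theorem incr_le (h : WeightBounds ω q β) (hβ : 0 < β) (hη : 0 < η)
    (hβη : 2 * β + 2 * η = 1) {d d' s t : ℝ} (hd : 0 < d) (hd' : 0 < d') (hd'π : d' < π)
    (hδπ : d + s < π) (hs : 0 < s) (ht : 0 ≤ t) (hdd : |d - d'| ≤ t) :
    (ω (d + s) * |Real.log (ω d') - Real.log (ω (d + s))|) ^ 2 ≤
      (β⁻¹ ^ 2 + 16 + 72 / η ^ 2) *
        ((s + t) ^ 2 * (incrKernel q η d (s + t) + incrKernel q η d' (s + t))) := by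
  obtain ⟨hl, hr⟩ := abs_le.1 hdd
  have hk := incrKernel_nonneg q η hd.le (add_nonneg hs.le ht)
  have hk' := incrKernel_nonneg q η hd'.le (add_nonneg hs.le ht)
  have hA : 0 ≤ β⁻¹ ^ 2 := by positivity
  have hB : 0 ≤ 72 / η ^ 2 := by positivity
  set K := (s + t) ^ 2 * incrKernel q η d (s + t)
  set K' := (s + t) ^ 2 * incrKernel q η d' (s + t)
  have hK : 0 ≤ K := mul_nonneg (sq_nonneg _) hk
  have hK' : 0 ≤ K' := mul_nonneg (sq_nonneg _) hk'
  rw [mul_add ((s + t) ^ 2)]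
  rcases le_total (d + s) d' with hle | hle
  · refine (h.incr_above_le hβ hη hβη hd hd'π hs ht (by linarith) hle).trans ?_
    exact mul_le_mul (by linarith) (by linarith) hK (by positivity)
  rcases le_or_gt (s + t) ((d + s) / 2) with hst | hst
  · refine (h.incr_below_near_le hβ hη hβη hd hδπ hs ht (by linarith) hle hst).trans ?_
    exact mul_le_mul (by linarith) (by linarith) hK (by positivity)
  · refine (h.incr_below_far_le hη hβη hβ hd' hδπ hle hst).trans ?_
    exact mul_le_mul (by linarith) (by linarith) hK' (by positivity)

end WeightBounds

theorem sq_lintegral_mul_le {α : Type*} [MeasurableSpace α] {μ : Measure α} {f g : α → ENNReal}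
    (hf : AEMeasurable f μ) (hg : AEMeasurable g μ) :
    (∫⁻ a, f a * g a ∂μ) ^ 2 ≤ (∫⁻ a, f a ^ 2 ∂μ) * ∫⁻ a, g a ^ 2 ∂μ := by
  have h := ENNReal.lintegral_mul_le_Lp_mul_Lq μ Real.HolderConjugate.two_two hf hg
  have hs : ∀ x : ENNReal, (x ^ (1 / (2 : ℝ))) ^ 2 = x := fun x => by
    rw [← ENNReal.rpow_natCast, ← ENNReal.rpow_mul]; norm_num
  calc (∫⁻ a, f a * g a ∂μ) ^ 2
      ≤ ((∫⁻ a, f a ^ (2 : ℝ) ∂μ) ^ (1 / (2 : ℝ)) * (∫⁻ a, g a ^ (2 : ℝ) ∂μ) ^ (1 / (2 : ℝ))) ^ 2 :=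
        pow_le_pow_left' h 2
    _ = _ := by
      rw [mul_pow, hs, hs]
      simp only [ENNReal.rpow_ofNat]

theorem continuous_cpt : Continuous cpt := by unfold cpt; fun_prop

theorem norm_cpt (θ : ℝ) : ‖cpt θ‖ = 1 := Complex.norm_exp_ofReal_mul_I θ

theorem cpt_ne_zero (θ : ℝ) : cpt θ ≠ 0 := Complex.exp_ne_zero _

theorem cpt_add (a b : ℝ) : cpt (a + b) = cpt a * cpt b := by
  unfold cpt; rw [← Complex.exp_add]; push_cast; ring_nf

theorem cpt_periodic : Function.Periodic cpt (2 * π) := fun θ => by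
  have : cpt (2 * π) = 1 := by unfold cpt; push_cast; exact Complex.exp_two_pi_mul_I
  rw [cpt_add, this, mul_one]

theorem lintegral_Ioc_cpt (F : ℂ → ENNReal) (a b : ℝ) :
    ∫⁻ θ in Ioc a (a + 2 * π), F (cpt θ) = ∫⁻ θ in Ioc b (b + 2 * π), F (cpt θ) := by
  have : VAddInvariantMeasure (AddSubgroup.zmultiples (2 * π)) ℝ volume :=
    ⟨fun c s _ => measure_preimage_add _ _ _⟩
  exact IsAddFundamentalDomain.setLIntegral_eq (G := AddSubgroup.zmultiples (2 * π))
    (isAddFundamentalDomain_Ioc two_pi_pos a) (isAddFundamentalDomain_Ioc two_pi_pos b) _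
    (cpt_periodic.comp F).map_vadd_zmultiples

theorem lintegral_unitDisc_polar {F : ℂ → ENNReal} (hF : Measurable F) :
    ∫⁻ z in unitDisc, F z =
      ∫⁻ r in Ioo (0 : ℝ) 1, ENNReal.ofReal r * ∫⁻ θ in Ioc 0 (2 * π), F ((r : ℂ) * cpt θ) := by
  have hcpt : ∀ p : ℝ × ℝ, Complex.polarCoord.symm p = (p.1 : ℂ) * cpt p.2 := fun p => by
    rw [Complex.polarCoord_symm_apply, cpt, Complex.exp_mul_I]; simp
  have hm : MeasurableSet unitDisc := measurableSet_ball
  have hm1 : Measurable fun p : ℝ × ℝ => F ((p.1 : ℂ) * cpt p.2) :=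
    hF.comp (by have := continuous_cpt.measurable; fun_prop)
  have hmi : Measurable (unitDisc.indicator F) := hF.indicator hm
  have hm2 : Measurable fun p : ℝ × ℝ => (unitDisc.indicator F) ((p.1 : ℂ) * cpt p.2) :=
    hmi.comp (by have := continuous_cpt.measurable; fun_prop)
  rw [← lintegral_indicator hm, ← Complex.lintegral_comp_polarCoord_symm]
  simp only [hcpt, smul_eq_mul]
  rw [polarCoord_target, Measure.volume_eq_prod, ← Measure.prod_restrict, lintegral_prod]
  swap
  · exact ((ENNReal.measurable_ofReal.comp measurable_fst).mul hm2).aemeasurable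
  have h1 : ∀ r ∈ Ioi (0 : ℝ),
      ∫⁻ θ in Ioo (-π) π, ENNReal.ofReal r * unitDisc.indicator F ((r : ℂ) * cpt θ) =
        (Ioo (0 : ℝ) 1).indicator (fun r : ℝ => ENNReal.ofReal r *
          ∫⁻ θ in Ioc 0 (2 * π), F ((r : ℂ) * cpt θ)) r := by
    intro r hr
    have hr0 : (0 : ℝ) < r := hr
    have hmem : ∀ θ, (r : ℂ) * cpt θ ∈ unitDisc ↔ r < 1 := fun θ => by
      simp [unitDisc, norm_cpt, abs_of_pos hr0]
    by_cases h : r < 1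
    · have hri : r ∈ Ioo (0 : ℝ) 1 := ⟨hr0, h⟩
      rw [indicator_of_mem hri, lintegral_const_mul', setLIntegral_congr Ioo_ae_eq_Ioc]
      · have := lintegral_Ioc_cpt (fun z => F ((r : ℂ) * z)) (-π) 0
        rw [show -π + 2 * π = π by ring, zero_add] at this
        rw [← this]
        congr 1
        refine lintegral_congr fun θ => ?_
        rw [indicator_of_mem ((hmem θ).2 h)]
      · exact ENNReal.ofReal_ne_top
    · have hri : r ∉ Ioo (0 : ℝ) 1 := fun h' => h h'.2
      rw [indicator_of_notMem hri]
      simp [indicator_of_notMem (mt (hmem _).1 h)]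
  rw [setLIntegral_congr_fun measurableSet_Ioi h1, setLIntegral_indicator measurableSet_Ioo]
  congr 2
  ext x
  simp only [mem_inter_iff, mem_Ioo, mem_Ioi]
  tauto

theorem norm_one_sub_cpt_ge {x : ℝ} (hx : |x| ≤ π) : |x| / 2 ≤ ‖1 - cpt x‖ := by
  have h1 : ‖1 - cpt x‖ = 2 * |Real.sin (x / 2)| := by
    rw [norm_sub_rev, cpt, mul_comm, Complex.norm_exp_I_mul_ofReal_sub_one]
    simp
  have h2 : |x / 2| ≤ π / 2 := by rw [abs_div, abs_two]; linarith
  have h3 := Real.mul_abs_le_abs_sin h2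
  rw [abs_div, abs_two] at h3
  have h4 : 1 / 2 ≤ 2 / π := by
    rw [div_le_div_iff₀ (by norm_num) pi_pos]; linarith [pi_le_four]
  rw [h1]
  have := mul_le_mul_of_nonneg_right h4 (abs_nonneg x)
  linarith

/-- Integrals over the circle of decreasing functions of the chord length. -/
theorem lintegral_chord_le {F : ℝ → ENNReal} (hF : AntitoneOn F (Ici 0)) (θ : ℝ) :
    ∫⁻ θ' in Ioc 0 (2 * π), F ‖cpt θ - cpt θ'‖ ≤ 2 * ∫⁻ x in Ioi (0 : ℝ), F (x / 2) := by
  have h0 : ∫⁻ θ' in Ioc 0 (2 * π), F ‖cpt θ - cpt θ'‖ =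
      ∫⁻ x in Ioc (-π) π, F ‖1 - cpt x‖ := by
    have h1 := lintegral_Ioc_cpt (fun z => F ‖cpt θ - z‖) 0 (-π + θ)
    rw [zero_add] at h1
    rw [h1, ← lintegral_indicator measurableSet_Ioc, ← lintegral_indicator measurableSet_Ioc,
      ← lintegral_add_right_eq_self _ θ]
    refine lintegral_congr fun x => ?_
    have h2 : ‖cpt θ - cpt (x + θ)‖ = ‖1 - cpt x‖ := by
      rw [cpt_add, ← one_sub_mul, norm_mul, norm_cpt, mul_one]
    by_cases hx : x ∈ Ioc (-π) π
    · rw [indicator_of_mem hx, indicator_of_mem, h2]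
      exact ⟨by linarith [hx.1], by linarith [hx.2]⟩
    · rw [indicator_of_notMem hx, indicator_of_notMem]
      exact fun h => hx ⟨by linarith [h.1], by linarith [h.2]⟩
  rw [h0]
  calc ∫⁻ x in Ioc (-π) π, F ‖1 - cpt x‖
      ≤ ∫⁻ x in Ioc (-π) π, F (|x| / 2) := by
        refine setLIntegral_mono' measurableSet_Ioc fun x hx => ?_
        exact hF (mem_Ici.2 (by positivity)) (norm_nonneg _) (norm_one_sub_cpt_ge (abs_le.2 ⟨hx.1.le, hx.2⟩))
    _ ≤ ∫⁻ x, F (|x| / 2) := setLIntegral_le_lintegral _ _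
    _ = (∫⁻ x in Iio (0 : ℝ), F (|x| / 2)) + ∫⁻ x in Ici (0 : ℝ), F (|x| / 2) := by
        rw [← lintegral_add_compl (μ := volume) (fun x : ℝ => F (|x| / 2)) measurableSet_Iio, compl_Iio]
    _ = (∫⁻ x in Ioi (0 : ℝ), F (x / 2)) + ∫⁻ x in Ioi (0 : ℝ), F (x / 2) := by
        congr 1
        · rw [← (Measure.measurePreserving_neg (volume : Measure ℝ)).setLIntegral_comp_preimage_emb
            (MeasurableEquiv.neg ℝ).measurableEmbedding]
          simp only [abs_neg, neg_preimage, neg_Iio, neg_zero]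
          refine setLIntegral_congr_fun measurableSet_Ioi fun x hx => ?_
          simp only [abs_of_pos (mem_Ioi.1 hx)]
        · rw [setLIntegral_congr Ioi_ae_eq_Ici.symm]
          refine setLIntegral_congr_fun measurableSet_Ioi fun x hx => ?_
          simp only [abs_of_pos (mem_Ioi.1 hx)]
    _ = _ := by rw [two_mul]

theorem lintegral_rpow_mul_add_rpow_le {b c d : ℝ} (hb : b < 1) (hbc : 1 < b + c)
    (hd : 0 < d) :
    ∫⁻ x in Ioi (0 : ℝ), ENNReal.ofReal (x ^ (-b) * (d + x) ^ (-c)) ≤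
      ENNReal.ofReal (((1 - b)⁻¹ + (b + c - 1)⁻¹) * d ^ (1 - b - c)) := by
  have hsplit : Ioi (0 : ℝ) = Ioc 0 d ∪ Ioi d := (Ioc_union_Ioi_eq_Ioi hd.le).symm
  have h1 : ∫⁻ x in Ioc (0 : ℝ) d, ENNReal.ofReal (x ^ (-b) * (d + x) ^ (-c)) ≤
      ENNReal.ofReal ((1 - b)⁻¹ * d ^ (1 - b - c)) := by
    have hint : IntegrableOn (fun x : ℝ => x ^ (-b)) (Ioc 0 d) := by
      rw [← intervalIntegrable_iff_integrableOn_Ioc_of_le hd.le]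
      exact intervalIntegral.intervalIntegrable_rpow' (by linarith)
    calc _ ≤ ∫⁻ x in Ioc (0 : ℝ) d, ENNReal.ofReal (x ^ (-b) * d ^ (-c)) := by
          refine setLIntegral_mono' measurableSet_Ioc fun x hx => ?_
          refine ENNReal.ofReal_le_ofReal ?_
          have hx0 := hx.1
          refine mul_le_mul_of_nonneg_left ?_ (by positivity)
          exact rpow_le_rpow_of_nonpos hd (by linarith) (by linarith)
      _ = ENNReal.ofReal (∫ x in Ioc (0 : ℝ) d, x ^ (-b) * d ^ (-c)) := by
          rw [ofReal_integral_eq_lintegral_ofReal (hint.mul_const _)]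
          filter_upwards [ae_restrict_mem measurableSet_Ioc] with x hx
          have hx0 := hx.1
          simp only [Pi.zero_apply]
          positivity
      _ = _ := by
          rw [integral_mul_const, ← intervalIntegral.integral_of_le hd.le,
            integral_rpow (Or.inl (by linarith)), zero_rpow (by linarith), sub_zero]
          congr 1
          rw [div_mul_eq_mul_div, ← rpow_add hd, div_eq_inv_mul]
          ring_nf
  have h2 : ∫⁻ x in Ioi d, ENNReal.ofReal (x ^ (-b) * (d + x) ^ (-c)) ≤
      ENNReal.ofReal ((b + c - 1)⁻¹ * d ^ (1 - b - c)) := by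
    calc _ ≤ ∫⁻ x in Ioi d, ENNReal.ofReal (x ^ (-b - c)) := by
          refine setLIntegral_mono' measurableSet_Ioi fun x hx => ?_
          refine ENNReal.ofReal_le_ofReal ?_
          have hx0 : 0 < x := hd.trans hx
          rw [sub_eq_add_neg, rpow_add hx0]
          refine mul_le_mul_of_nonneg_left ?_ (by positivity)
          exact rpow_le_rpow_of_nonpos hx0 (by linarith) (by linarith)
      _ = ENNReal.ofReal (∫ x in Ioi d, x ^ (-b - c)) := by
          rw [ofReal_integral_eq_lintegral_ofReal (integrableOn_Ioi_rpow_of_lt (by linarith) hd)]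
          filter_upwards [ae_restrict_mem measurableSet_Ioi] with x hx
          have hx0 : 0 < x := hd.trans hx
          simp only [Pi.zero_apply]
          positivity
      _ = _ := by
          rw [integral_Ioi_rpow_of_lt (by linarith) hd]
          congr 1
          rw [show -b - c + 1 = -(b + c - 1) by ring, neg_div_neg_eq, div_eq_inv_mul]
          ring_nf
  have h3 : 0 ≤ d ^ (1 - b - c) := by positivity
  rw [hsplit, add_mul, ENNReal.ofReal_add (mul_nonneg (inv_nonneg.2 (by linarith)) h3)
    (mul_nonneg (inv_nonneg.2 (by linarith)) h3)]
  exact (lintegral_union_le _ _ _).trans (add_le_add h1 h2)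

theorem add_half_rpow_le {s x c : ℝ} (hs : 0 < s) (hx : 0 ≤ x) (hc0 : 0 ≤ c) (hc : c ≤ 2) :
    (s + x / 2) ^ (-c) ≤ 4 * (s + x) ^ (-c) := by
  have h1 : (s + x / 2) ^ (-c) ≤ ((s + x) / 2) ^ (-c) :=
    rpow_le_rpow_of_nonpos (by linarith) (by linarith) (by linarith)
  have h2 : (2 : ℝ) ^ c ≤ 4 := by
    calc (2 : ℝ) ^ c ≤ 2 ^ (2 : ℝ) := rpow_le_rpow_of_exponent_le (by norm_num) hc
      _ = 4 := by norm_num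
  have h3 : 0 ≤ (s + x) ^ (-c) := rpow_nonneg (by linarith) _
  rw [div_rpow (by linarith) (by norm_num), rpow_neg (by norm_num : (0 : ℝ) ≤ 2), div_inv_eq_mul]
    at h1
  nlinarith

theorem lintegral_chord_rpow_le {s : ℝ} (hs : 0 < s) (θ : ℝ) :
    ∫⁻ θ' in Ioc 0 (2 * π), ENNReal.ofReal ((s + ‖cpt θ - cpt θ'‖) ^ (-(3 / 2) : ℝ)) ≤
      ENNReal.ofReal (24 * s ^ (-(1 / 2) : ℝ)) := by
  have hanti : AntitoneOn (fun t : ℝ => ENNReal.ofReal ((s + t) ^ (-(3 / 2) : ℝ))) (Ici 0) := by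
    intro x hx y hy hxy
    have hx0 : 0 ≤ x := hx
    exact ENNReal.ofReal_le_ofReal
      (rpow_le_rpow_of_nonpos (by linarith) (by linarith) (by norm_num))
  refine (lintegral_chord_le hanti θ).trans ?_
  have h1 : ∫⁻ x in Ioi (0 : ℝ), ENNReal.ofReal ((s + x / 2) ^ (-(3 / 2) : ℝ)) ≤
      ENNReal.ofReal 4 * ENNReal.ofReal (3 * s ^ (-(1 / 2) : ℝ)) := by
    have h2 := lintegral_rpow_mul_add_rpow_le (b := 0) (c := 3 / 2) (by norm_num)
      (by norm_num) hs
    calc _ ≤ ∫⁻ x in Ioi (0 : ℝ), ENNReal.ofReal 4 *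
          ENNReal.ofReal (x ^ (-0 : ℝ) * (s + x) ^ (-(3 / 2) : ℝ)) := by
          refine setLIntegral_mono' measurableSet_Ioi fun x hx => ?_
          rw [← ENNReal.ofReal_mul (by norm_num)]
          refine ENNReal.ofReal_le_ofReal ?_
          rw [neg_zero, rpow_zero, one_mul]
          exact add_half_rpow_le hs (le_of_lt hx) (by norm_num) (by norm_num)
      _ ≤ _ := by
          rw [lintegral_const_mul' _ _ ENNReal.ofReal_ne_top]
          refine mul_le_mul_right (h2.trans (le_of_eq ?_)) _
          norm_num
  calc _ ≤ 2 * (ENNReal.ofReal 4 * ENNReal.ofReal (3 * s ^ (-(1 / 2) : ℝ))) := by gcongr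
    _ = _ := by
      rw [← ENNReal.ofReal_mul (by norm_num), ← ENNReal.ofReal_ofNat 2,
        ← ENNReal.ofReal_mul (by norm_num)]
      congr 1; ring

theorem one_sub_log_le {d s X : ℝ} (hd : 0 < d) (hd2 : d ≤ 2) (hs : 0 < s) (hX : d ≤ X)
    (hsX : s ≤ X) :
    1 - Real.log s ≤ 9 * (2 - Real.log d) * (X / s) ^ (1 / 8 : ℝ) := by
  have h1 : Real.log d ≤ 1 := by
    have := Real.log_le_sub_one_of_pos hd
    linarith
  have h2 : 1 ≤ (X / s) ^ (1 / 8 : ℝ) :=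
    one_le_rpow ((one_le_div hs).2 hsX) (by norm_num)
  have h3 : Real.log (d / s) ≤ (d / s) ^ (1 / 8 : ℝ) / (1 / 8) :=
    Real.log_le_rpow_div (div_pos hd hs).le (by norm_num)
  have h4 : (d / s) ^ (1 / 8 : ℝ) ≤ (X / s) ^ (1 / 8 : ℝ) := by gcongr
  rw [Real.log_div hd.ne' hs.ne'] at h3
  nlinarith

theorem potential_integrand_le {η d s x : ℝ} (hη : 0 < η) (hη' : η < 1) (hd : 0 < d) (hd2 : d ≤ 2)
    (hs : 0 < s) (hx : 0 < x) :
    s ^ (-(1 / 2) : ℝ) * (1 - Real.log s) *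
      ((s + x / 2) ^ (-(1 / 2) : ℝ) * (d + (s + x / 2)) ^ (-1 - η)) ≤
    144 * (2 - Real.log d) * (s ^ (-(7 / 8) : ℝ) * (d + s) ^ (-(1 / 8 + η / 2))) *
      (x ^ (-(1 / 4) : ℝ) * (d + x) ^ (-(3 / 4 + η / 2))) := by
  have hT : 0 < s + x / 2 := by linarith
  have hX : 0 < d + (s + x / 2) := by linarith
  set T := s + x / 2 with hTdef
  set X := d + T with hXdef
  have hlogd : Real.log d ≤ 1 := by
    have := Real.log_le_sub_one_of_pos hd
    linarith
  have hlog := one_sub_log_le hd hd2 hs (X := X) (by linarith) (by linarith)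
  rw [div_rpow hX.le hs.le, div_eq_mul_inv, ← rpow_neg hs.le] at hlog
  have h1 : T ^ (-(1 / 2) : ℝ) ≤ s ^ (-(1 / 4) : ℝ) * (2 * x ^ (-(1 / 4) : ℝ)) := by
    have h2 : T ^ (-(1 / 4) : ℝ) ≤ s ^ (-(1 / 4) : ℝ) :=
      rpow_le_rpow_of_nonpos hs (by linarith) (by norm_num)
    have h3 : T ^ (-(1 / 4) : ℝ) ≤ (x / 2) ^ (-(1 / 4) : ℝ) :=
      rpow_le_rpow_of_nonpos (by linarith) (by linarith) (by norm_num)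
    rw [div_rpow hx.le (by norm_num), rpow_neg (by norm_num : (0 : ℝ) ≤ 2), div_inv_eq_mul] at h3
    have h4 : (2 : ℝ) ^ (1 / 4 : ℝ) ≤ 2 := by
      calc (2 : ℝ) ^ (1 / 4 : ℝ) ≤ 2 ^ (1 : ℝ) :=
            rpow_le_rpow_of_exponent_le (by norm_num) (by norm_num)
        _ = 2 := rpow_one 2
    calc T ^ (-(1 / 2) : ℝ) = T ^ (-(1 / 4) : ℝ) * T ^ (-(1 / 4) : ℝ) := by
          rw [← rpow_add hT]; norm_num
      _ ≤ s ^ (-(1 / 4) : ℝ) * (x ^ (-(1 / 4) : ℝ) * 2 ^ (1 / 4 : ℝ)) := by gcongr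
      _ ≤ s ^ (-(1 / 4) : ℝ) * (x ^ (-(1 / 4) : ℝ) * 2) := by gcongr
      _ = _ := by ring
  have h2 : X ^ (1 / 8 : ℝ) * X ^ (-1 - η) ≤
      (d + s) ^ (-(1 / 8 + η / 2)) * (8 * (d + x) ^ (-(3 / 4 + η / 2))) := by
    have h3 : X ^ (-(1 / 8 + η / 2)) ≤ (d + s) ^ (-(1 / 8 + η / 2)) :=
      rpow_le_rpow_of_nonpos (by linarith) (by linarith) (by linarith)
    have h4 : X ^ (-(3 / 4 + η / 2)) ≤ 4 * (d + x) ^ (-(3 / 4 + η / 2)) := by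
      refine le_trans ?_ (add_half_rpow_le hd hx.le (by linarith) (by linarith))
      exact rpow_le_rpow_of_nonpos (by linarith) (by linarith) (by linarith)
    have h5 : 0 ≤ (d + x) ^ (-(3 / 4 + η / 2)) := by positivity
    calc X ^ (1 / 8 : ℝ) * X ^ (-1 - η)
        = X ^ (-(1 / 8 + η / 2)) * X ^ (-(3 / 4 + η / 2)) := by
          rw [← rpow_add hX, ← rpow_add hX]; ring_nf
      _ ≤ (d + s) ^ (-(1 / 8 + η / 2)) * (4 * (d + x) ^ (-(3 / 4 + η / 2))) := by gcongr
      _ ≤ _ := by gcongr; norm_num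
  have h3 : s ^ (-(7 / 8) : ℝ) =
      s ^ (-(1 / 2) : ℝ) * s ^ (-(1 / 8) : ℝ) * s ^ (-(1 / 4) : ℝ) := by
    rw [← rpow_add hs, ← rpow_add hs]; norm_num
  have hL : 0 ≤ 2 - Real.log d := by linarith
  calc s ^ (-(1 / 2) : ℝ) * (1 - Real.log s) * (T ^ (-(1 / 2) : ℝ) * X ^ (-1 - η))
      ≤ s ^ (-(1 / 2) : ℝ) * (9 * (2 - Real.log d) * (X ^ (1 / 8 : ℝ) * s ^ (-(1 / 8) : ℝ))) *
        ((s ^ (-(1 / 4) : ℝ) * (2 * x ^ (-(1 / 4) : ℝ))) * X ^ (-1 - η)) := by gcongr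
    _ = 18 * (2 - Real.log d) * s ^ (-(7 / 8) : ℝ) * x ^ (-(1 / 4) : ℝ) *
        (X ^ (1 / 8 : ℝ) * X ^ (-1 - η)) := by rw [h3]; ring
    _ ≤ 18 * (2 - Real.log d) * s ^ (-(7 / 8) : ℝ) * x ^ (-(1 / 4) : ℝ) *
        ((d + s) ^ (-(1 / 8 + η / 2)) * (8 * (d + x) ^ (-(3 / 4 + η / 2)))) := by gcongr
    _ = _ := by ring

theorem lintegral_potential_le {η : ℝ} (hη : 0 < η) (hη' : η < 1) :
    ∃ C : ℝ, 0 ≤ C ∧ ∀ d : ℝ, 0 < d → d ≤ 2 → ∀ θ : ℝ,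
      ∫⁻ s in Ioo (0 : ℝ) 1, ∫⁻ θ' in Ioc 0 (2 * π),
        ENNReal.ofReal (s ^ (-(1 / 2) : ℝ) * (1 - Real.log s) *
          ((s + ‖cpt θ - cpt θ'‖) ^ (-(1 / 2) : ℝ) *
            (d + (s + ‖cpt θ - cpt θ'‖)) ^ (-1 - η))) ≤
      ENNReal.ofReal (C * (d ^ (-η) * (2 - Real.log d))) := by
  set A := (1 - 7 / 8 : ℝ)⁻¹ + (7 / 8 + (1 / 8 + η / 2) - 1)⁻¹ with hA
  set B := (1 - 1 / 4 : ℝ)⁻¹ + (1 / 4 + (3 / 4 + η / 2) - 1)⁻¹ with hB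
  have hA0 : 0 ≤ A := by
    have : (7 / 8 + (1 / 8 + η / 2) - 1) = η / 2 := by ring
    rw [hA, this]; norm_num; positivity
  have hB0 : 0 ≤ B := by
    have : (1 / 4 + (3 / 4 + η / 2) - 1) = η / 2 := by ring
    rw [hB, this]; norm_num; positivity
  refine ⟨288 * A * B, by positivity, fun d hd hd2 θ => ?_⟩
  have hlogd : Real.log d ≤ 1 := by
    have := Real.log_le_sub_one_of_pos hd
    linarith
  set P := fun s : ℝ => s ^ (-(7 / 8) : ℝ) * (d + s) ^ (-(1 / 8 + η / 2)) with hP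
  set Q := fun x : ℝ => x ^ (-(1 / 4) : ℝ) * (d + x) ^ (-(3 / 4 + η / 2)) with hQ
  have hPint := lintegral_rpow_mul_add_rpow_le (b := 7 / 8) (c := 1 / 8 + η / 2) (by norm_num)
    (by linarith) hd
  have hQint := lintegral_rpow_mul_add_rpow_le (b := 1 / 4) (c := 3 / 4 + η / 2) (by norm_num)
    (by linarith) hd
  have hL0 : 0 ≤ 144 * (2 - Real.log d) := by linarith
  have hP0 : ∀ s, 0 < s → 0 ≤ P s := fun s hs => by simp only [hP]; positivity
  have inner : ∀ s ∈ Ioo (0 : ℝ) 1, ∫⁻ θ' in Ioc 0 (2 * π),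
        ENNReal.ofReal (s ^ (-(1 / 2) : ℝ) * (1 - Real.log s) *
          ((s + ‖cpt θ - cpt θ'‖) ^ (-(1 / 2) : ℝ) *
            (d + (s + ‖cpt θ - cpt θ'‖)) ^ (-1 - η))) ≤
      2 * (ENNReal.ofReal (144 * (2 - Real.log d) * P s) * ∫⁻ x in Ioi (0 : ℝ), ENNReal.ofReal (Q x)) := by
    intro s hs
    have hs0 := hs.1
    have hlogs : Real.log s ≤ 0 := Real.log_nonpos hs.1.le hs.2.le
    have hanti : AntitoneOn (fun t : ℝ => ENNReal.ofReal (s ^ (-(1 / 2) : ℝ) * (1 - Real.log s) *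
          ((s + t) ^ (-(1 / 2) : ℝ) * (d + (s + t)) ^ (-1 - η)))) (Ici 0) := by
      intro x hx y hy hxy
      have hx0 : 0 ≤ x := hx
      have hy0 : 0 ≤ y := hy
      refine ENNReal.ofReal_le_ofReal ?_
      have h1 : (s + y) ^ (-(1 / 2) : ℝ) ≤ (s + x) ^ (-(1 / 2) : ℝ) :=
        rpow_le_rpow_of_nonpos (by linarith) (by linarith) (by norm_num)
      have h2 : (d + (s + y)) ^ (-1 - η) ≤ (d + (s + x)) ^ (-1 - η) :=
        rpow_le_rpow_of_nonpos (by linarith) (by linarith) (by linarith)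
      have h3 : 0 ≤ (d + (s + y)) ^ (-1 - η) := rpow_nonneg (by linarith) _
      have h4 : 0 ≤ (s + x) ^ (-(1 / 2) : ℝ) := by positivity
      have h5 : 0 ≤ 1 - Real.log s := by linarith
      gcongr
    refine (lintegral_chord_le hanti θ).trans ?_
    rw [← lintegral_const_mul' _ _ ENNReal.ofReal_ne_top]
    gcongr 2 * ?_
    refine setLIntegral_mono' measurableSet_Ioi fun x hx => ?_
    rw [← ENNReal.ofReal_mul (mul_nonneg hL0 (hP0 s hs0))]
    exact ENNReal.ofReal_le_ofReal (potential_integrand_le hη hη' hd hd2 hs.1 hx)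
  refine (setLIntegral_mono' measurableSet_Ioo inner).trans ?_
  have hQtop : ∫⁻ x in Ioi (0 : ℝ), ENNReal.ofReal (Q x) ≠ ⊤ :=
    ne_top_of_le_ne_top ENNReal.ofReal_ne_top hQint
  rw [lintegral_const_mul' _ _ (by simp), lintegral_mul_const' _ _ hQtop]
  have hPP : ∫⁻ s in Ioo (0 : ℝ) 1, ENNReal.ofReal (144 * (2 - Real.log d) * P s) ≤
      ENNReal.ofReal (144 * (2 - Real.log d)) * ∫⁻ s in Ioi (0 : ℝ), ENNReal.ofReal (P s) := by
    simp only [ENNReal.ofReal_mul hL0]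
    rw [lintegral_const_mul' _ _ ENNReal.ofReal_ne_top]
    gcongr
    exact Ioo_subset_Ioi_self
  have hdd : d ^ (1 - 7 / 8 - (1 / 8 + η / 2)) * d ^ (1 - 1 / 4 - (3 / 4 + η / 2)) = d ^ (-η) := by
    rw [← rpow_add hd]; ring_nf
  have hd1 : 0 ≤ d ^ (1 - 7 / 8 - (1 / 8 + η / 2)) := by positivity
  calc _ ≤ 2 * (ENNReal.ofReal (144 * (2 - Real.log d)) *
        ENNReal.ofReal (A * d ^ (1 - 7 / 8 - (1 / 8 + η / 2))) *
        ENNReal.ofReal (B * d ^ (1 - 1 / 4 - (3 / 4 + η / 2)))) := by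
        gcongr
        exact hPP.trans (by gcongr)
    _ = _ := by
      rw [← ENNReal.ofReal_mul hL0, ← ENNReal.ofReal_mul (by positivity), ← ENNReal.ofReal_ofNat 2,
        ← ENNReal.ofReal_mul (by norm_num), ← hdd]
      congr 1; ring

theorem mem_unitDisc {z : ℂ} : z ∈ unitDisc ↔ ‖z‖ < 1 := by simp [unitDisc]

theorem norm_ofReal_mul_cpt {r : ℝ} (hr : 0 ≤ r) (θ : ℝ) : ‖(r : ℂ) * cpt θ‖ = r := by
  rw [norm_mul, norm_cpt, mul_one, Complex.norm_real, Real.norm_of_nonneg hr]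

theorem enorm_sq_le_lintegral_circle {h : ℂ → ℂ} (hh : DifferentiableOn ℂ h unitDisc) {t : ℝ}
    (ht0 : 0 ≤ t) (ht1 : t < 1) (θ₀ : ℝ) :
    ENNReal.ofReal (1 - t) * ‖h (t * cpt θ₀)‖ₑ ^ 2 ≤
      ∫⁻ θ in Ioc 0 (2 * π), ‖h (((1 + t) / 2 : ℝ) * cpt θ)‖ₑ ^ 2 := by
  set r := (1 + t) / 2 with hr
  have hr0 : 0 < r := by linarith
  have hr1 : r < 1 := by linarith
  have htr : t < r := by linarith
  have hd : DifferentiableOn ℂ (fun z => h z ^ 2) (Metric.closedBall 0 r) :=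
    (hh.mono fun z hz => mem_unitDisc.2 ((mem_closedBall_zero_iff.1 hz).trans_lt hr1)).pow 2
  set w := (t : ℂ) * cpt θ₀ with hw
  have hwn : ‖w‖ = t := norm_ofReal_mul_cpt ht0 θ₀
  have hcauchy := hd.circleIntegral_sub_inv_smul (w := w) (by simpa [hwn] using htr)
  have hc : ‖(2 * π * Complex.I : ℂ) • (h w ^ 2)‖ₑ ≤
      ∫⁻ θ in Ioc 0 (2 * π), ENNReal.ofReal (2 / (1 - t)) * ‖h (r * cpt θ)‖ₑ ^ 2 := by
    rw [← hcauchy, circleIntegral, intervalIntegral.integral_of_le two_pi_pos.le]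
    refine (enorm_integral_le_lintegral_enorm _).trans (lintegral_mono fun θ => ?_)
    have hcm : circleMap 0 r θ = r * cpt θ := by simp [circleMap, cpt]
    have hz : r - t ≤ ‖(r : ℂ) * cpt θ - w‖ := by
      have := norm_sub_norm_le ((r : ℂ) * cpt θ) w
      rwa [norm_ofReal_mul_cpt hr0.le, hwn] at this
    have hk : ‖deriv (circleMap 0 r) θ * ((r : ℂ) * cpt θ - w)⁻¹‖ ≤ 2 / (1 - t) := by
      rw [norm_mul, norm_inv, deriv_circleMap, norm_mul, Complex.norm_I, mul_one, hcm,
        norm_ofReal_mul_cpt hr0.le]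
      calc r * ‖(r : ℂ) * cpt θ - w‖⁻¹ ≤ 1 * (r - t)⁻¹ := by
            gcongr
        _ = 2 / (1 - t) := by
          have : r - t = (1 - t) / 2 := by rw [hr]; ring
          rw [this, one_mul, inv_div]
    rw [hcm, smul_eq_mul, smul_eq_mul, ← mul_assoc, enorm_mul, enorm_pow, ← ofReal_norm]
    gcongr
  rw [lintegral_const_mul' _ _ ENNReal.ofReal_ne_top] at hc
  have h2 : ‖(2 * π * Complex.I : ℂ)‖ₑ = ENNReal.ofReal (2 * π) := by
    rw [← ofReal_norm]; simp [abs_of_pos pi_pos]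
  rw [smul_eq_mul, enorm_mul, h2, enorm_pow] at hc
  have ht : 0 < 1 - t := by linarith
  calc ENNReal.ofReal (1 - t) * ‖h w‖ₑ ^ 2
      ≤ ENNReal.ofReal ((1 - t) / 2) * (ENNReal.ofReal (2 * π) * ‖h w‖ₑ ^ 2) := by
        rw [← mul_assoc, ← ENNReal.ofReal_mul (by positivity)]
        gcongr
        nlinarith [pi_gt_three]
    _ ≤ ENNReal.ofReal ((1 - t) / 2) * (ENNReal.ofReal (2 / (1 - t)) *
          ∫⁻ θ in Ioc 0 (2 * π), ‖h (r * cpt θ)‖ₑ ^ 2) := by gcongr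
    _ = _ := by
      rw [← mul_assoc, ← ENNReal.ofReal_mul (by positivity)]
      have : (1 - t) / 2 * (2 / (1 - t)) = 1 := by field_simp
      rw [this, ENNReal.ofReal_one, one_mul]

theorem lintegral_radial_le {h : ℂ → ℂ} (hh : DifferentiableOn ℂ h unitDisc) (hm : Measurable h)
    (θ₀ : ℝ) :
    ∫⁻ t in Ioo (0 : ℝ) 1, ENNReal.ofReal (1 - t) * ‖h (t * cpt θ₀)‖ₑ ^ 2 ≤
      4 * ∫⁻ z in unitDisc, ‖h z‖ₑ ^ 2 := by
  set m : ℝ → ENNReal := fun r => ∫⁻ θ in Ioc 0 (2 * π), ‖h (r * cpt θ)‖ₑ ^ 2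
  have h1 := lintegral_image_eq_lintegral_abs_deriv_mul (f := fun t : ℝ => (1 + t) / 2)
    (f' := fun _ => 1 / 2) (s := Ioo 0 1) measurableSet_Ioo
    (fun x _ => (((hasDerivAt_id x).const_add 1).div_const 2).hasDerivWithinAt)
    (fun x _ y _ hxy => by simpa using hxy) m
  have himg : (fun t : ℝ => (1 + t) / 2) '' Ioo 0 1 ⊆ Ioo (1 / 2) 1 := by
    rintro _ ⟨t, ht, rfl⟩
    constructor <;> simp only <;> linarith [ht.1, ht.2]
  have h12 : ENNReal.ofReal |(1 / 2 : ℝ)| = 2⁻¹ := by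
    rw [abs_of_pos (by norm_num), one_div, ENNReal.ofReal_inv_of_pos (by norm_num)]; simp
  rw [h12, lintegral_const_mul' _ _ (by simp)] at h1
  calc _ ≤ ∫⁻ t in Ioo (0 : ℝ) 1, m ((1 + t) / 2) :=
        setLIntegral_mono' measurableSet_Ioo fun t ht =>
          enorm_sq_le_lintegral_circle hh ht.1.le ht.2 θ₀
    _ = 2 * (2⁻¹ * ∫⁻ t in Ioo (0 : ℝ) 1, m ((1 + t) / 2)) := by
        rw [← mul_assoc, ENNReal.mul_inv_cancel (by simp) (by simp), one_mul]
    _ ≤ 2 * ∫⁻ r in Ioo (1 / 2 : ℝ) 1, m r := by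
        rw [← h1]; gcongr
    _ ≤ 2 * ∫⁻ r in Ioo (1 / 2 : ℝ) 1, 2 * (ENNReal.ofReal r * m r) := by
        gcongr 2 * ?_
        refine setLIntegral_mono' measurableSet_Ioo fun r hr => ?_
        rw [← mul_assoc]
        refine le_mul_of_one_le_left' ?_
        rw [← ENNReal.ofReal_ofNat 2, ← ENNReal.ofReal_mul (by norm_num), ENNReal.one_le_ofReal]
        linarith [hr.1]
    _ ≤ 2 * (2 * ∫⁻ r in Ioo (0 : ℝ) 1, ENNReal.ofReal r * m r) := by
        rw [lintegral_const_mul' _ _ (by simp)]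
        gcongr
        norm_num
    _ = _ := by
        rw [lintegral_unitDisc_polar (F := fun z => ‖h z‖ₑ ^ 2) (by fun_prop), ← mul_assoc,
          show (2 : ENNReal) * 2 = 4 by norm_num]

theorem norm_sub_sq_le_log {g : ℂ → ℂ} (hg : DifferentiableOn ℂ g unitDisc)
    (hi : ∫⁻ z in unitDisc, ‖deriv g z‖ₑ ^ 2 ≠ ⊤) {R : ℝ} (hR0 : 0 ≤ R) (hR1 : R < 1) (θ : ℝ) :
    ‖g (R * cpt θ) - g 0‖ ^ 2 ≤
      (4 * ∫⁻ z in unitDisc, ‖deriv g z‖ₑ ^ 2).toReal * (-Real.log (1 - R)) := by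
  have hopen : IsOpen unitDisc := Metric.isOpen_ball
  have hh : DifferentiableOn ℂ (deriv g) unitDisc := hg.deriv hopen
  have hmem : ∀ t ∈ Icc 0 R, (t : ℂ) * cpt θ ∈ unitDisc := fun t ht => by
    rw [mem_unitDisc, norm_ofReal_mul_cpt ht.1]; exact ht.2.trans_lt hR1
  have hderiv : ∀ t ∈ uIcc 0 R, HasDerivAt (fun t : ℝ => g (t * cpt θ))
      (deriv g (t * cpt θ) * cpt θ) t := fun t ht => by
    rw [uIcc_of_le hR0] at ht
    have h1 := (hg.differentiableAt (hopen.mem_nhds (hmem t ht))).hasDerivAt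
    have h2 : HasDerivAt (fun t : ℝ => (t : ℂ) * cpt θ) (cpt θ) t := by
      simpa using (Complex.ofRealCLM.hasDerivAt (x := t)).mul_const (cpt θ)
    exact h1.comp t h2
  have hcont : ContinuousOn (fun t : ℝ => deriv g (t * cpt θ) * cpt θ) (Icc 0 R) := by
    refine ContinuousOn.mul ?_ continuousOn_const
    exact hh.continuousOn.comp (by fun_prop) hmem
  have hftc := intervalIntegral.integral_eq_sub_of_hasDerivAt hderiv
    (hcont.intervalIntegrable_of_Icc hR0)
  simp only [Complex.ofReal_zero, zero_mul] at hftc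
  have hle : ‖g (R * cpt θ) - g 0‖ₑ ≤ ∫⁻ t in Ioc 0 R,
      (ENNReal.ofReal (√(1 - t)) * ‖deriv g (t * cpt θ)‖ₑ) * ENNReal.ofReal (√(1 - t))⁻¹ := by
    rw [← hftc, intervalIntegral.integral_of_le hR0]
    refine (enorm_integral_le_lintegral_enorm _).trans
      (setLIntegral_mono' measurableSet_Ioc fun t ht => ?_)
    have ht1 : 0 < √(1 - t) := Real.sqrt_pos.2 (by linarith [ht.2])
    rw [mul_right_comm, ← ENNReal.ofReal_mul ht1.le, mul_inv_cancel₀ ht1.ne', ENNReal.ofReal_one,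
      one_mul, enorm_mul, ← ofReal_norm (cpt θ), norm_cpt, ENNReal.ofReal_one, mul_one]
  have hmd : Measurable (deriv g) := measurable_deriv g
  have hcs := sq_lintegral_mul_le (μ := volume.restrict (Ioc 0 R))
    (f := fun t : ℝ => ENNReal.ofReal (√(1 - t)) * ‖deriv g (t * cpt θ)‖ₑ)
    (g := fun t : ℝ => ENNReal.ofReal (√(1 - t))⁻¹) (by fun_prop) (by fun_prop)
  have hA : ∫⁻ t in Ioc 0 R, (ENNReal.ofReal (√(1 - t)) * ‖deriv g (t * cpt θ)‖ₑ) ^ 2 ≤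
      4 * ∫⁻ z in unitDisc, ‖deriv g z‖ₑ ^ 2 := by
    refine le_trans ?_ (lintegral_radial_le hh hmd θ)
    refine le_trans (setLIntegral_mono' measurableSet_Ioc fun t ht => ?_)
      (lintegral_mono_set fun t ht => ⟨ht.1, ht.2.trans_lt hR1⟩)
    rw [mul_pow, ← ENNReal.ofReal_pow (by positivity), Real.sq_sqrt (by linarith [ht.2])]
  have hB : ∫⁻ t in Ioc 0 R, ENNReal.ofReal (√(1 - t))⁻¹ ^ 2 = ENNReal.ofReal (-Real.log (1 - R)) := by
    have hd : ∀ t ∈ uIcc 0 R, HasDerivAt (fun t : ℝ => -Real.log (1 - t)) (1 - t)⁻¹ t := fun t ht => by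
      rw [uIcc_of_le hR0] at ht
      have h1 : (1 : ℝ) - t ≠ 0 := by linarith [ht.2]
      have h2 := (((hasDerivAt_id' t).const_sub 1).log h1).neg
      rwa [neg_div, neg_neg, one_div] at h2
    have hc : ContinuousOn (fun t : ℝ => (1 - t)⁻¹) (Icc 0 R) :=
      ContinuousOn.inv₀ (by fun_prop) fun t ht => by linarith [ht.2]
    have hint := hc.intervalIntegrable_of_Icc (μ := volume) hR0
    have := intervalIntegral.integral_eq_sub_of_hasDerivAt hd hint
    rw [intervalIntegral.integral_of_le hR0] at this
    simp only [sub_zero, Real.log_one, neg_zero] at this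
    rw [← this, ofReal_integral_eq_lintegral_ofReal
      ((intervalIntegrable_iff_integrableOn_Ioc_of_le hR0).1 hint)]
    · refine setLIntegral_congr_fun measurableSet_Ioc fun t ht => ?_
      have h0 : 0 ≤ 1 - t := by linarith [ht.2]
      rw [← ENNReal.ofReal_pow (by positivity), inv_pow, Real.sq_sqrt h0]
    · refine (ae_restrict_iff' measurableSet_Ioc).2 (.of_forall fun t ht => ?_)
      have h0 : 0 ≤ 1 - t := by linarith [ht.2]
      simpa using h0
  have hfin : 4 * ∫⁻ z in unitDisc, ‖deriv g z‖ₑ ^ 2 ≠ ⊤ := ENNReal.mul_ne_top (by simp) hi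
  have hlog : 0 ≤ -Real.log (1 - R) := by
    have := Real.log_nonpos (x := 1 - R) (by linarith) (by linarith)
    linarith
  have key : ENNReal.ofReal (‖g (R * cpt θ) - g 0‖ ^ 2) ≤
      ENNReal.ofReal ((4 * ∫⁻ z in unitDisc, ‖deriv g z‖ₑ ^ 2).toReal * (-Real.log (1 - R))) := by
    rw [ENNReal.ofReal_mul ENNReal.toReal_nonneg, ENNReal.ofReal_toReal hfin,
      ENNReal.ofReal_pow (norm_nonneg _), ofReal_norm, ← hB]
    exact (pow_le_pow_left' hle 2).trans (hcs.trans (by gcongr))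
  exact (ENNReal.ofReal_le_ofReal_iff (mul_nonneg ENNReal.toReal_nonneg hlog)).1 key

/-- Functions with finite Dirichlet integral have at most logarithmic growth. -/
theorem exists_norm_sq_le_log {g : ℂ → ℂ} (hg : DifferentiableOn ℂ g unitDisc)
    (hi : ∫⁻ z in unitDisc, ‖deriv g z‖ₑ ^ 2 ≠ ⊤) :
    ∃ C : ℝ, 0 ≤ C ∧ ∀ w ∈ unitDisc, ‖g w‖ ^ 2 ≤ C * (1 - Real.log (1 - ‖w‖)) := by
  set D := (4 * ∫⁻ z in unitDisc, ‖deriv g z‖ₑ ^ 2).toReal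
  have hD : 0 ≤ D := ENNReal.toReal_nonneg
  refine ⟨2 * ‖g 0‖ ^ 2 + 2 * D, by positivity, fun w hw => ?_⟩
  rw [mem_unitDisc] at hw
  have hww : (‖w‖ : ℂ) * cpt w.arg = w := by
    rw [cpt]; exact Complex.norm_mul_exp_arg_mul_I w
  have h := norm_sub_sq_le_log hg hi (norm_nonneg w) hw w.arg
  rw [hww] at h
  have hlog : 0 ≤ -Real.log (1 - ‖w‖) := by
    have := Real.log_nonpos (x := 1 - ‖w‖) (by linarith) (by linarith [norm_nonneg w])
    linarith
  have h3 : ‖g w‖ ≤ ‖g w - g 0‖ + ‖g 0‖ := by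
    simpa using norm_add_le (g w - g 0) (g 0)
  have h4 : ‖g w‖ ^ 2 ≤ 2 * ‖g w - g 0‖ ^ 2 + 2 * ‖g 0‖ ^ 2 := by
    nlinarith [norm_nonneg (g w), norm_nonneg (g w - g 0), norm_nonneg (g 0),
      sq_nonneg (‖g w - g 0‖ - ‖g 0‖)]
  nlinarith [mul_nonneg (sq_nonneg ‖g 0‖) hlog]

/-- The Schwarz (Herglotz) integral of a boundary function. -/
noncomputable def schwarzInt (u : ℝ → ℝ) (z : ℂ) : ℂ :=
  ∫ θ in Ioc 0 (2 * π), (cpt θ + z) / (cpt θ - z) * (u θ : ℂ)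

theorem one_sub_norm_le_norm_cpt_sub (θ : ℝ) (z : ℂ) : 1 - ‖z‖ ≤ ‖cpt θ - z‖ := by
  have := norm_sub_norm_le (cpt θ) z
  rwa [norm_cpt] at this

theorem cpt_sub_ne_zero {z : ℂ} (hz : ‖z‖ < 1) (θ : ℝ) : cpt θ - z ≠ 0 := by
  have := one_sub_norm_le_norm_cpt_sub θ z
  exact norm_pos_iff.1 (by linarith)

theorem continuous_schwarz_kernel {z : ℂ} (hz : ‖z‖ < 1) :
    Continuous fun θ => (cpt θ + z) / (cpt θ - z) :=
  have := continuous_cpt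
  Continuous.div (by fun_prop) (by fun_prop) (cpt_sub_ne_zero hz)

theorem continuous_schwarz_kernel_deriv {z : ℂ} (hz : ‖z‖ < 1) :
    Continuous fun θ => 2 * cpt θ / (cpt θ - z) ^ 2 :=
  have := continuous_cpt
  Continuous.div (by fun_prop) (by fun_prop) fun θ => pow_ne_zero 2 (cpt_sub_ne_zero hz θ)

theorem Continuous.integrableOn_mul_ofReal {k : ℝ → ℂ} {u : ℝ → ℝ} (hk : Continuous k)
    (hu : IntegrableOn u (Ioc 0 (2 * π))) :
    IntegrableOn (fun θ => k θ * (u θ : ℂ)) (Ioc 0 (2 * π)) := by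
  obtain ⟨C, hC⟩ := (isCompact_Icc (a := 0) (b := 2 * π)).exists_bound_of_continuousOn
    hk.continuousOn
  refine Integrable.bdd_mul (c := C) (Integrable.ofReal hu) hk.aestronglyMeasurable ?_
  exact (ae_restrict_iff' measurableSet_Ioc).2 (.of_forall fun θ hθ => hC θ (Ioc_subset_Icc_self hθ))

theorem hasDerivAt_schwarzInt {u : ℝ → ℝ} (hu : IntegrableOn u (Ioc 0 (2 * π))) {z : ℂ}
    (hz : ‖z‖ < 1) :
    HasDerivAt (schwarzInt u)
      (∫ θ in Ioc 0 (2 * π), 2 * cpt θ / (cpt θ - z) ^ 2 * (u θ : ℂ)) z := by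
  set ε := (1 - ‖z‖) / 2 with hε
  have hε0 : 0 < ε := by linarith
  have hball : ∀ x ∈ Metric.ball z ε, ‖x‖ < 1 - ε := fun x hx => by
    have h1 : ‖x - z‖ < ε := mem_ball_iff_norm.1 hx
    have h2 : ‖x‖ ≤ ‖x - z‖ + ‖z‖ := by simpa using norm_add_le (x - z) z
    linarith
  refine (hasDerivAt_integral_of_dominated_loc_of_deriv_le
    (F := fun z θ => (cpt θ + z) / (cpt θ - z) * (u θ : ℂ))
    (F' := fun z θ => 2 * cpt θ / (cpt θ - z) ^ 2 * (u θ : ℂ))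
    (bound := fun θ => 2 / ε ^ 2 * |u θ|) (Metric.ball_mem_nhds z hε0) ?_
    ((continuous_schwarz_kernel hz).integrableOn_mul_ofReal hu)
    ((continuous_schwarz_kernel_deriv hz).integrableOn_mul_ofReal hu).aestronglyMeasurable
    (.of_forall fun θ x hx => ?_) (hu.abs.const_mul _) (.of_forall fun θ x hx => ?_)).2
  · filter_upwards [Metric.ball_mem_nhds z hε0] with x hx
    exact ((continuous_schwarz_kernel
      (by linarith [hball x hx])).integrableOn_mul_ofReal hu).aestronglyMeasurable
  · have h1 : ε ≤ ‖cpt θ - x‖ := by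
      linarith [one_sub_norm_le_norm_cpt_sub θ x, hball x hx]
    rw [norm_mul, norm_div, norm_mul, norm_cpt, norm_pow, Complex.norm_real, Complex.norm_ofNat,
      mul_one, Real.norm_eq_abs]
    gcongr
  · have hne := cpt_sub_ne_zero (z := x) (by linarith [hball x hx]) θ
    have h1 := (((hasDerivAt_id' x).const_add (cpt θ)).div
      ((hasDerivAt_id' x).const_sub (cpt θ)) hne).mul_const (u θ : ℂ)
    refine h1.congr_deriv ?_
    field_simp
    ring

theorem integral_schwarz_kernel_deriv {z : ℂ} (hz : ‖z‖ < 1) :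
    ∫ θ in Ioc 0 (2 * π), 2 * cpt θ / (cpt θ - z) ^ 2 = 0 := by
  have hd : ∀ θ ∈ uIcc 0 (2 * π), HasDerivAt (fun θ => 2 * Complex.I * (cpt θ - z)⁻¹)
      (2 * cpt θ / (cpt θ - z) ^ 2) θ := fun θ _ => by
    have h1 : HasDerivAt cpt (cpt θ * Complex.I) θ := by
      have h2 : HasDerivAt (fun θ : ℝ => (θ : ℂ) * Complex.I) Complex.I θ := by
        simpa using (Complex.ofRealCLM.hasDerivAt (x := θ)).mul_const Complex.I
      exact h2.cexp
    have h3 := ((h1.sub_const z).inv (cpt_sub_ne_zero hz θ)).const_mul (2 * Complex.I)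
    refine h3.congr_deriv ?_
    have : Complex.I * Complex.I = -1 := Complex.I_mul_I
    linear_combination -(2 * cpt θ / (cpt θ - z) ^ 2) * this
  have h := intervalIntegral.integral_eq_sub_of_hasDerivAt hd
    ((continuous_schwarz_kernel_deriv hz).intervalIntegrable _ _)
  rw [intervalIntegral.integral_of_le two_pi_pos.le] at h
  rw [h, ← zero_add (2 * π), cpt_periodic 0, sub_self]

theorem integral_schwarz_kernel {z : ℂ} (hz : ‖z‖ < 1) :
    ∫ θ in Ioc 0 (2 * π), (cpt θ + z) / (cpt θ - z) = 2 * π := by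
  have hone : IntegrableOn (fun _ : ℝ => (1 : ℝ)) (Ioc 0 (2 * π)) :=
    integrableOn_const measure_Ioc_lt_top.ne
  have hd : ∀ x ∈ unitDisc, HasDerivAt (schwarzInt fun _ => 1) 0 x := fun x hx => by
    have h1 := hasDerivAt_schwarzInt hone (mem_unitDisc.1 hx)
    simpa only [Complex.ofReal_one, mul_one, integral_schwarz_kernel_deriv (mem_unitDisc.1 hx)]
      using h1
  have h0 : schwarzInt (fun _ => 1) z = schwarzInt (fun _ => 1) 0 :=
    Metric.isOpen_ball.is_const_of_deriv_eq_zero (convex_ball (0 : ℂ) 1).isPreconnected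
      (fun x hx => (hd x hx).differentiableAt.differentiableWithinAt)
      (fun x hx => (hd x hx).deriv) (mem_unitDisc.2 hz) (by simp)
  have h1 : schwarzInt (fun _ => 1) 0 = 2 * π := by
    simp [schwarzInt, div_self (cpt_ne_zero _), two_pi_pos.le]
  rw [← h1, ← h0]
  simp [schwarzInt]

theorem schwarzInt_sub_const {u : ℝ → ℝ} (hu : IntegrableOn u (Ioc 0 (2 * π))) (c : ℝ) {z : ℂ}
    (hz : ‖z‖ < 1) : schwarzInt (fun θ => u θ - c) z = schwarzInt u z - 2 * π * c := by
  have hk := continuous_schwarz_kernel hz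
  have hc : IntegrableOn (fun _ : ℝ => c) (Ioc 0 (2 * π)) :=
    integrableOn_const measure_Ioc_lt_top.ne
  rw [← integral_schwarz_kernel hz, ← integral_mul_const]
  unfold schwarzInt
  rw [← integral_sub (hk.integrableOn_mul_ofReal hu) (hk.integrableOn_mul_ofReal hc)]
  refine integral_congr_ae (.of_forall fun θ => ?_)
  simp only
  push_cast; ring

theorem re_schwarz_kernel {z : ℂ} (hz : ‖z‖ < 1) (θ : ℝ) :
    ((cpt θ + z) / (cpt θ - z)).re = (1 - ‖z‖ ^ 2) / ‖cpt θ - z‖ ^ 2 := by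
  have hne := cpt_sub_ne_zero hz θ
  have h1 : ‖cpt θ‖ ^ 2 = 1 := by rw [norm_cpt, one_pow]
  rw [Complex.div_re, ← add_div, Complex.normSq_eq_norm_sq]
  congr 1
  rw [← h1, Complex.sq_norm, Complex.sq_norm, Complex.normSq_apply, Complex.normSq_apply]
  simp
  ring

theorem schwarzInt_re {u : ℝ → ℝ} (hu : IntegrableOn u (Ioc 0 (2 * π))) {z : ℂ} (hz : ‖z‖ < 1) :
    (schwarzInt u z).re = ∫ θ in Ioc 0 (2 * π), (1 - ‖z‖ ^ 2) / ‖cpt θ - z‖ ^ 2 * u θ := by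
  have h := integral_re ((continuous_schwarz_kernel hz).integrableOn_mul_ofReal hu)
  rw [schwarzInt]
  simp only [RCLike.re_eq_complex_re, Complex.re_mul_ofReal, re_schwarz_kernel hz] at h
  exact h.symm

/-- The exponential of the normalized Schwarz integral: the outer function with boundary modulus
`exp u`. -/
noncomputable def schwarzExp (u : ℝ → ℝ) (z : ℂ) : ℂ :=
  Complex.exp ((((2 * π)⁻¹ : ℝ) : ℂ) * schwarzInt u z)

theorem add_chord_le (θ θ' : ℝ) {s : ℝ} (hs : s ∈ Ioo (0 : ℝ) 1) :
    (s + ‖cpt θ - cpt θ'‖) / 3 ≤ ‖cpt θ' - ((1 - s : ℝ) : ℂ) * cpt θ‖ := by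
  have hs1 : 0 ≤ 1 - s := by linarith [hs.2]
  have h1 := one_sub_norm_le_norm_cpt_sub θ' (((1 - s : ℝ) : ℂ) * cpt θ)
  rw [norm_ofReal_mul_cpt hs1] at h1
  have h2 : ‖cpt θ - cpt θ'‖ ≤ s + ‖cpt θ' - ((1 - s : ℝ) : ℂ) * cpt θ‖ := by
    have h3 : cpt θ - cpt θ' = (s : ℂ) * cpt θ - (cpt θ' - ((1 - s : ℝ) : ℂ) * cpt θ) := by
      push_cast; ring
    have h4 := norm_sub_le ((s : ℂ) * cpt θ) (cpt θ' - ((1 - s : ℝ) : ℂ) * cpt θ)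
    rwa [← h3, norm_ofReal_mul_cpt hs.1.le] at h4
  linarith

theorem norm_one_sub_mul_cpt_lt {s : ℝ} (hs : s ∈ Ioo (0 : ℝ) 1) (θ : ℝ) :
    ‖((1 - s : ℝ) : ℂ) * cpt θ‖ < 1 := by
  rw [norm_ofReal_mul_cpt (by linarith [hs.2])]; linarith [hs.1]

theorem norm_schwarzExp {u : ℝ → ℝ} (hu : IntegrableOn u (Ioc 0 (2 * π))) (c : ℝ) {z : ℂ}
    (hz : ‖z‖ < 1) :
    ‖schwarzExp u z‖ = Real.exp c * Real.exp ((2 * π)⁻¹ *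
      ∫ θ in Ioc 0 (2 * π), (1 - ‖z‖ ^ 2) / ‖cpt θ - z‖ ^ 2 * (u θ - c)) := by
  have huc : IntegrableOn (fun θ => u θ - c) (Ioc 0 (2 * π)) :=
    hu.sub (integrableOn_const measure_Ioc_lt_top.ne)
  have h1 := schwarzInt_sub_const hu c hz
  rw [← schwarzInt_re huc hz, h1, schwarzExp, Complex.norm_exp, Complex.re_ofReal_mul,
    ← Real.exp_add]
  congr 1
  have : ((2 * π * c : ℂ)).re = 2 * π * c := by
    rw [← Complex.ofReal_re (2 * π * c)]; push_cast; rfl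
  rw [Complex.sub_re, this]
  field_simp
  ring

theorem norm_schwarzExp_le {u : ℝ → ℝ} (hu : IntegrableOn u (Ioc 0 (2 * π))) {c s θ : ℝ}
    (hs : s ∈ Ioo (0 : ℝ) 1)
    (huc : ∀ᵐ θ' ∂volume.restrict (Ioc 0 (2 * π)),
      u θ' - c ≤ 2 * ((s + ‖cpt θ - cpt θ'‖) / s) ^ (1 / 2 : ℝ)) :
    ‖schwarzExp u (((1 - s : ℝ) : ℂ) * cpt θ)‖ ≤ Real.exp 144 * Real.exp c := by
  have hw := norm_one_sub_mul_cpt_lt hs θ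
  have hs0 := hs.1
  set w := ((1 - s : ℝ) : ℂ) * cpt θ with hwdef
  have hwn : ‖w‖ = 1 - s := norm_ofReal_mul_cpt (by linarith [hs.2]) θ
  have hcc := continuous_cpt
  have hint : Integrable (fun θ' => 36 * s ^ (1 / 2 : ℝ) *
      (s + ‖cpt θ - cpt θ'‖) ^ (-(3 / 2) : ℝ)) (volume.restrict (Ioc 0 (2 * π))) := by
    have : Continuous fun θ' => 36 * s ^ (1 / 2 : ℝ) * (s + ‖cpt θ - cpt θ'‖) ^ (-(3 / 2) : ℝ) :=
      continuous_const.mul (Continuous.rpow_const (by fun_prop) fun θ' => Or.inl (by positivity))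
    exact (this.integrableOn_Icc).mono_set Ioc_subset_Icc_self
  have hP : Integrable (fun θ' => (1 - ‖w‖ ^ 2) / ‖cpt θ' - w‖ ^ 2 * (u θ' - c))
      (volume.restrict (Ioc 0 (2 * π))) := by
    have huc' : IntegrableOn (fun θ => u θ - c) (Ioc 0 (2 * π)) :=
      hu.sub (integrableOn_const measure_Ioc_lt_top.ne)
    have h := ((continuous_schwarz_kernel hw).integrableOn_mul_ofReal huc').re
    simpa only [RCLike.re_eq_complex_re, Complex.re_mul_ofReal, re_schwarz_kernel hw] using h
  have hle : ∫ θ' in Ioc 0 (2 * π), (1 - ‖w‖ ^ 2) / ‖cpt θ' - w‖ ^ 2 * (u θ' - c) ≤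
      ∫ θ' in Ioc 0 (2 * π), 36 * s ^ (1 / 2 : ℝ) * (s + ‖cpt θ - cpt θ'‖) ^ (-(3 / 2) : ℝ) := by
    refine integral_mono_ae hP hint ?_
    filter_upwards [huc] with θ' h'
    set τ := s + ‖cpt θ - cpt θ'‖ with hτ
    have hτ0 : 0 < τ := by positivity
    have h1 : (1 - ‖w‖ ^ 2) / ‖cpt θ' - w‖ ^ 2 ≤ 2 * s / (τ / 3) ^ 2 := by
      have := add_chord_le θ θ' hs
      gcongr
      rw [hwn]; nlinarith
    have h0 : 0 ≤ (1 - ‖w‖ ^ 2) / ‖cpt θ' - w‖ ^ 2 :=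
      div_nonneg (by rw [hwn]; nlinarith [hs.2]) (by positivity)
    calc _ ≤ (1 - ‖w‖ ^ 2) / ‖cpt θ' - w‖ ^ 2 * (2 * (τ / s) ^ (1 / 2 : ℝ)) := by gcongr
      _ ≤ 2 * s / (τ / 3) ^ 2 * (2 * (τ / s) ^ (1 / 2 : ℝ)) := by gcongr
      _ = 36 * s ^ (1 / 2 : ℝ) * τ ^ (-(3 / 2) : ℝ) := by
        have e1 : s ^ (1 / 2 : ℝ) * s ^ (1 / 2 : ℝ) = s := by
          rw [← rpow_add hs0]; norm_num
        have e2 : τ ^ (-(3 / 2) : ℝ) * τ ^ 2 = τ ^ (1 / 2 : ℝ) := by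
          rw [← rpow_natCast τ 2, ← rpow_add hτ0]; norm_num
        have e3 : s ^ (1 / 2 : ℝ) ≠ 0 := by positivity
        rw [div_rpow hτ0.le hs0.le, ← e2]
        have e4 : s / s ^ (1 / 2 : ℝ) = s ^ (1 / 2 : ℝ) := by rw [div_eq_iff e3, e1]
        generalize τ ^ (-(3 / 2) : ℝ) = b
        have e5 : 2 * s / (τ / 3) ^ 2 * (2 * (b * τ ^ 2 / s ^ (1 / 2 : ℝ))) =
            36 * (s / s ^ (1 / 2 : ℝ)) * b := by
          generalize s ^ (1 / 2 : ℝ) = a at e3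
          field_simp
          ring
        rw [e5, e4]
  have hb : ∫ θ' in Ioc 0 (2 * π), 36 * s ^ (1 / 2 : ℝ) *
      (s + ‖cpt θ - cpt θ'‖) ^ (-(3 / 2) : ℝ) ≤ 864 := by
    rw [integral_const_mul, integral_eq_lintegral_of_nonneg_ae
      (.of_forall fun θ' => by positivity) (by
        have : Measurable cpt := hcc.measurable
        exact (by fun_prop : Measurable _).aestronglyMeasurable)]
    have h1 := ENNReal.toReal_mono ENNReal.ofReal_ne_top (lintegral_chord_rpow_le hs0 θ)
    rw [ENNReal.toReal_ofReal (by positivity)] at h1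
    calc _ ≤ 36 * s ^ (1 / 2 : ℝ) * (24 * s ^ (-(1 / 2) : ℝ)) := by gcongr
      _ = 864 := by
        have : s ^ (1 / 2 : ℝ) * s ^ (-(1 / 2) : ℝ) = 1 := by
          rw [← rpow_add hs0]; norm_num
        linear_combination 864 * this
  rw [norm_schwarzExp hu c hw, mul_comm]
  gcongr
  calc (2 * π)⁻¹ * _ ≤ (2 * π)⁻¹ * 864 := by
        gcongr; exact hle.trans hb
    _ ≤ 6⁻¹ * 864 := by
        gcongr; linarith [pi_gt_three]
    _ = 144 := by norm_num

theorem hasDerivAt_schwarzExp {u : ℝ → ℝ} (hu : IntegrableOn u (Ioc 0 (2 * π))) (c : ℝ) {z : ℂ}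
    (hz : ‖z‖ < 1) :
    HasDerivAt (schwarzExp u) (schwarzExp u z * ((((2 * π)⁻¹ : ℝ) : ℂ) *
      ∫ θ in Ioc 0 (2 * π), 2 * cpt θ / (cpt θ - z) ^ 2 * ((u θ - c : ℝ) : ℂ))) z := by
  have h := ((hasDerivAt_schwarzInt hu hz).const_mul (((2 * π)⁻¹ : ℝ) : ℂ)).cexp
  refine h.congr_deriv ?_
  have hk := continuous_schwarz_kernel_deriv hz
  have hc : IntegrableOn (fun _ : ℝ => c) (Ioc 0 (2 * π)) :=
    integrableOn_const measure_Ioc_lt_top.ne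
  have h1 : ∫ θ in Ioc 0 (2 * π), 2 * cpt θ / (cpt θ - z) ^ 2 * ((u θ - c : ℝ) : ℂ) =
      ∫ θ in Ioc 0 (2 * π), 2 * cpt θ / (cpt θ - z) ^ 2 * (u θ : ℂ) := by
    simp only [Complex.ofReal_sub, mul_sub]
    rw [integral_sub (hk.integrableOn_mul_ofReal hu) (hk.integrableOn_mul_ofReal hc),
      integral_mul_const, integral_schwarz_kernel_deriv hz, zero_mul, sub_zero]
  rw [h1, schwarzExp]

theorem differentiableOn_schwarzExp {u : ℝ → ℝ} (hu : IntegrableOn u (Ioc 0 (2 * π))) :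
    DifferentiableOn ℂ (schwarzExp u) unitDisc := fun _ hz =>
  (hasDerivAt_schwarzExp hu 0 (mem_unitDisc.1 hz)).differentiableAt.differentiableWithinAt

theorem enorm_deriv_schwarzExp_le {u : ℝ → ℝ} (hu : IntegrableOn u (Ioc 0 (2 * π))) (c : ℝ)
    {s : ℝ} (hs : s ∈ Ioo (0 : ℝ) 1) (θ : ℝ) :
    ‖deriv (schwarzExp u) (((1 - s : ℝ) : ℂ) * cpt θ)‖ₑ ≤
      ‖schwarzExp u (((1 - s : ℝ) : ℂ) * cpt θ)‖ₑ * ∫⁻ θ' in Ioc 0 (2 * π),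
        ENNReal.ofReal (3 * (|u θ' - c| / (s + ‖cpt θ - cpt θ'‖) ^ 2)) := by
  have hw := norm_one_sub_mul_cpt_lt hs θ
  have hs0 := hs.1
  rw [(hasDerivAt_schwarzExp hu c hw).deriv, enorm_mul, enorm_mul]
  gcongr
  calc _ ≤ ‖(((2 * π)⁻¹ : ℝ) : ℂ)‖ₑ * ∫⁻ θ' in Ioc 0 (2 * π), ENNReal.ofReal
        (18 * (|u θ' - c| / (s + ‖cpt θ - cpt θ'‖) ^ 2)) := by
        gcongr
        refine (enorm_integral_le_lintegral_enorm _).trans (lintegral_mono fun θ' => ?_)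
        rw [← ofReal_norm, norm_mul, norm_div, norm_mul, norm_cpt, norm_pow, Complex.norm_real,
          Complex.norm_ofNat, mul_one, Real.norm_eq_abs]
        refine ENNReal.ofReal_le_ofReal ?_
        calc _ ≤ 2 / ((s + ‖cpt θ - cpt θ'‖) / 3) ^ 2 * |u θ' - c| := by
              gcongr; exact add_chord_le θ θ' hs
          _ = _ := by field_simp; ring
    _ = ∫⁻ θ' in Ioc 0 (2 * π), ENNReal.ofReal ((2 * π)⁻¹ *
        (18 * (|u θ' - c| / (s + ‖cpt θ - cpt θ'‖) ^ 2))) := by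
        have hp : 0 ≤ (2 * π)⁻¹ := by positivity
        simp only [ENNReal.ofReal_mul hp]
        rw [lintegral_const_mul' _ _ ENNReal.ofReal_ne_top, ← ofReal_norm, Complex.norm_real,
          Real.norm_of_nonneg hp]
    _ ≤ _ := by
        refine lintegral_mono fun θ' => ENNReal.ofReal_le_ofReal ?_
        rw [← mul_assoc]
        gcongr
        rw [inv_mul_le_iff₀ (by positivity)]
        linarith [pi_gt_three]

theorem WeightBounds.log_sub_log_le_rpow {ω q : ℝ → ℝ} {β d d' s t : ℝ} (h : WeightBounds ω q β)
    (hβ : 0 < β) (hβ1 : β ≤ 1) (hd : 0 ≤ d) (hd' : 0 < d') (hd'π : d' < π) (hδπ : d + s < π)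
    (hs : 0 < s) (ht : 0 ≤ t) (hdd : d' ≤ d + t) :
    Real.log (ω d') - Real.log (ω (d + s)) ≤ 2 * ((s + t) / s) ^ (1 / 2 : ℝ) := by
  have hδ : d + s ∈ Ioo 0 π := ⟨by linarith, hδπ⟩
  have hd'm : d' ∈ Ioo 0 π := ⟨hd', hd'π⟩
  rcases le_total d' (d + s) with hle | hle
  · have h1 : Real.log (ω d') ≤ Real.log (ω (d + s)) :=
      Real.log_le_log (h.pos _ hd'm) (h.mono hd'm hδ hle)
    have h2 : 0 ≤ ((s + t) / s) ^ (1 / 2 : ℝ) := by positivity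
    linarith
  · have h1 := h.log_sub_log_le hβ hδ hd'm hle
    have hx1 : 1 ≤ d' / (d + s) := by rwa [one_le_div (by linarith)]
    have h2 : d' / (d + s) ≤ (s + t) / s := by
      rw [div_le_div_iff₀ (by linarith) hs]
      nlinarith [mul_nonneg hd ht]
    have h3 : Real.log (d' / (d + s)) ≤ Real.log ((s + t) / s) :=
      Real.log_le_log (by linarith) h2
    have h4 : Real.log ((s + t) / s) ≤ 2 * ((s + t) / s) ^ (1 / 2 : ℝ) := by
      have := Real.log_le_rpow_div (x := (s + t) / s) (by positivity) (ε := 1 / 2) (by norm_num)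
      linarith
    have h5 : 0 ≤ Real.log (d' / (d + s)) := Real.log_nonneg hx1
    nlinarith

/-- The data entering the estimates for the outer function: `D` plays the role of the distance
function of the exceptional set along the circle. -/
structure DistanceData (D : ℝ → ℝ) : Prop where
  cont : Continuous D
  le_two : ∀ θ, D θ ≤ 2
  pos : ∀ᵐ θ ∂volume.restrict (Ioc 0 (2 * π)), 0 < D θ
  lip : ∀ θ θ', |D θ - D θ'| ≤ ‖cpt θ - cpt θ'‖

theorem norm_schwarzExp_le_weight {ω q D : ℝ → ℝ} {β : ℝ} (h : WeightBounds ω q β) (hβ : 0 < β)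
    (hβ1 : β ≤ 1) (hD : DistanceData D)
    (hu : IntegrableOn (fun θ => Real.log (ω (D θ))) (Ioc 0 (2 * π)))
    {s θ : ℝ} (hs : s ∈ Ioo (0 : ℝ) 1) (hθ : 0 ≤ D θ) :
    ‖schwarzExp (fun θ => Real.log (ω (D θ))) (((1 - s : ℝ) : ℂ) * cpt θ)‖ ≤
      Real.exp 144 * ω (D θ + s) := by
  have hδ : D θ + s < π := by linarith [hD.le_two θ, hs.2, pi_gt_three]
  have hω := h.pos (D θ + s) ⟨by linarith [hs.1], hδ⟩
  rw [← Real.exp_log hω]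
  refine norm_schwarzExp_le hu hs ?_
  filter_upwards [hD.pos] with θ' hθ'
  refine h.log_sub_log_le_rpow hβ hβ1 hθ hθ' (by linarith [hD.le_two θ', pi_gt_three]) hδ hs.1
    (norm_nonneg _) ?_
  have := (abs_le.1 (hD.lip θ θ')).1
  linarith

theorem enorm_deriv_schwarzExp_sq_le {ω q D : ℝ → ℝ} {β η : ℝ} (h : WeightBounds ω q β)
    (hβ : 0 < β) (hη : 0 < η) (hβη : 2 * β + 2 * η = 1) (hD : DistanceData D)
    (hu : IntegrableOn (fun θ => Real.log (ω (D θ))) (Ioc 0 (2 * π))) :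
    ∃ C : ℝ, 0 ≤ C ∧ ∀ s ∈ Ioo (0 : ℝ) 1, ∀ θ, 0 < D θ →
      ‖deriv (schwarzExp fun θ => Real.log (ω (D θ))) (((1 - s : ℝ) : ℂ) * cpt θ)‖ₑ ^ 2 ≤
        ENNReal.ofReal (C * s ^ (-(1 / 2) : ℝ)) * ∫⁻ θ' in Ioc 0 (2 * π),
          ENNReal.ofReal ((s + ‖cpt θ - cpt θ'‖) ^ (-(1 / 2) : ℝ) *
            (incrKernel q η (D θ) (s + ‖cpt θ - cpt θ'‖) +
              incrKernel q η (D θ') (s + ‖cpt θ - cpt θ'‖))) := by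
  set B := β⁻¹ ^ 2 + 16 + 72 / η ^ 2 with hB
  have hB0 : 0 ≤ B := by positivity
  set M := Real.exp 144 with hM
  refine ⟨9 * M ^ 2 * B * 24, by positivity, fun s hs θ hθ => ?_⟩
  have hs0 := hs.1
  have hδ : D θ + s < π := by linarith [hD.le_two θ, hs.2, pi_gt_three]
  have hω := h.pos (D θ + s) ⟨by linarith [hs.1], hδ⟩
  set c := Real.log (ω (D θ + s)) with hc
  set u := fun θ => Real.log (ω (D θ))
  set τ := fun θ' => s + ‖cpt θ - cpt θ'‖ with hτ
  have hτ0 : ∀ θ', 0 < τ θ' := fun θ' => by positivity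
  have hmc : Measurable cpt := continuous_cpt.measurable
  have hmτ : Measurable τ := by fun_prop
  have hum : AEMeasurable u (volume.restrict (Ioc 0 (2 * π))) := hu.aestronglyMeasurable.aemeasurable
  have h1 : ‖deriv (schwarzExp u) (((1 - s : ℝ) : ℂ) * cpt θ)‖ₑ ≤ ∫⁻ θ' in Ioc 0 (2 * π),
      ENNReal.ofReal (3 * M * (ω (D θ + s) * |u θ' - c|) * τ θ' ^ (-(5 / 4) : ℝ)) *
        ENNReal.ofReal (τ θ' ^ (-(3 / 4) : ℝ)) := by
    refine (enorm_deriv_schwarzExp_le hu c hs θ).trans ?_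
    rw [← lintegral_const_mul' _ _ enorm_ne_top]
    refine lintegral_mono fun θ' => ?_
    have h2 := norm_schwarzExp_le_weight h hβ (by linarith) hD hu hs hθ.le
    rw [← ofReal_norm, ← ENNReal.ofReal_mul (norm_nonneg _),
      ← ENNReal.ofReal_mul (by have := (hτ0 θ').le; positivity)]
    refine ENNReal.ofReal_le_ofReal ?_
    have h3 : τ θ' ^ (-(5 / 4) : ℝ) * τ θ' ^ (-(3 / 4) : ℝ) = (τ θ' ^ 2)⁻¹ := by
      rw [← rpow_add (hτ0 θ'), ← rpow_natCast (τ θ') 2, ← rpow_neg (hτ0 θ').le]; norm_num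
    calc _ ≤ M * ω (D θ + s) * (3 * (|u θ' - c| / τ θ' ^ 2)) := by gcongr
      _ = 3 * M * (ω (D θ + s) * |u θ' - c|) * (τ θ' ^ 2)⁻¹ := by rw [div_eq_mul_inv]; ring
      _ = _ := by rw [← h3]; ring
  refine (pow_le_pow_left' h1 2).trans ((sq_lintegral_mul_le (by fun_prop) (by fun_prop)).trans ?_)
  have h2 : ∫⁻ θ' in Ioc 0 (2 * π), ENNReal.ofReal (τ θ' ^ (-(3 / 4) : ℝ)) ^ 2 ≤
      ENNReal.ofReal (24 * s ^ (-(1 / 2) : ℝ)) := by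
    refine le_trans (le_of_eq (lintegral_congr fun θ' => ?_)) (lintegral_chord_rpow_le hs0 θ)
    rw [← ENNReal.ofReal_pow (rpow_nonneg (hτ0 θ').le _), ← rpow_natCast, ← rpow_mul (hτ0 θ').le]
    norm_num [hτ]
  have h3 : ∫⁻ θ' in Ioc 0 (2 * π), ENNReal.ofReal
      (3 * M * (ω (D θ + s) * |u θ' - c|) * τ θ' ^ (-(5 / 4) : ℝ)) ^ 2 ≤
      ENNReal.ofReal (9 * M ^ 2 * B) * ∫⁻ θ' in Ioc 0 (2 * π),
          ENNReal.ofReal (τ θ' ^ (-(1 / 2) : ℝ) *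
            (incrKernel q η (D θ) (τ θ') + incrKernel q η (D θ') (τ θ'))) := by
    rw [← lintegral_const_mul' _ _ ENNReal.ofReal_ne_top]
    refine lintegral_mono_ae ?_
    filter_upwards [hD.pos] with θ' hθ'
    have h4 := h.incr_le hβ hη hβη hθ hθ' (by linarith [hD.le_two θ', pi_gt_three]) hδ hs0
      (norm_nonneg _) (hD.lip θ θ')
    have h5 := (hτ0 θ').le
    rw [← ENNReal.ofReal_pow (by positivity), ← ENNReal.ofReal_mul (by positivity)]
    refine ENNReal.ofReal_le_ofReal ?_
    have h6 : (τ θ' ^ (-(5 / 4) : ℝ)) ^ 2 * τ θ' ^ 2 = τ θ' ^ (-(1 / 2) : ℝ) := by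
      rw [← rpow_natCast, ← rpow_natCast, ← rpow_mul h5, ← rpow_add (hτ0 θ')]; norm_num
    calc _ = 9 * M ^ 2 * (τ θ' ^ (-(5 / 4) : ℝ)) ^ 2 * (ω (D θ + s) * |u θ' - c|) ^ 2 := by ring
      _ ≤ 9 * M ^ 2 * (τ θ' ^ (-(5 / 4) : ℝ)) ^ 2 * (B * (τ θ' ^ 2 *
            (incrKernel q η (D θ) (τ θ') + incrKernel q η (D θ') (τ θ')))) := by gcongr
      _ = _ := by rw [← h6]; ring
  calc _ ≤ _ := mul_le_mul' h3 h2
    _ = ENNReal.ofReal (9 * M ^ 2 * B) * ENNReal.ofReal (24 * s ^ (-(1 / 2) : ℝ)) * _ := by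
        rw [mul_right_comm]
    _ = _ := by
        rw [← ENNReal.ofReal_mul (by positivity)]
        congr 2; ring

theorem lintegral_Ioo_one_sub (F : ℝ → ENNReal) :
    ∫⁻ r in Ioo (0 : ℝ) 1, F r = ∫⁻ s in Ioo (0 : ℝ) 1, F (1 - s) := by
  rw [← lintegral_indicator measurableSet_Ioo, ← lintegral_indicator measurableSet_Ioo,
    ← lintegral_sub_left_eq_self _ (1 : ℝ)]
  refine lintegral_congr fun s => ?_
  have : 1 - s ∈ Ioo (0 : ℝ) 1 ↔ s ∈ Ioo (0 : ℝ) 1 := by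
    simp only [mem_Ioo]; constructor <;> rintro ⟨h1, h2⟩ <;> constructor <;> linarith
  by_cases hs : s ∈ Ioo (0 : ℝ) 1
  · rw [indicator_of_mem hs, indicator_of_mem (this.2 hs)]
  · rw [indicator_of_notMem hs, indicator_of_notMem (mt this.1 hs)]

theorem lintegral_symm_add {α β : Type*} [MeasurableSpace α] [MeasurableSpace β] {μ : Measure α}
    {ν : Measure β} [SFinite μ] [SFinite ν] {H : β → α → α → ENNReal}
    (hH : Measurable fun p : β × α × α => H p.1 p.2.1 p.2.2) :
    ∫⁻ s, ∫⁻ x, ∫⁻ y, H s x y + H s y x ∂μ ∂μ ∂ν = 2 * ∫⁻ x, ∫⁻ s, ∫⁻ y, H s x y ∂μ ∂ν ∂μ := by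
  have hs : ∀ s, Measurable fun p : α × α => H s p.1 p.2 := fun s =>
    hH.comp (measurable_const.prodMk measurable_id)
  have h1 : ∀ s, ∫⁻ x, ∫⁻ y, H s x y + H s y x ∂μ ∂μ = 2 * ∫⁻ x, ∫⁻ y, H s x y ∂μ ∂μ := fun s => by
    have h2 : ∀ x, ∫⁻ y, H s x y + H s y x ∂μ = ∫⁻ y, H s x y ∂μ + ∫⁻ y, H s y x ∂μ := fun x =>
      lintegral_add_left ((hs s).comp (measurable_const.prodMk measurable_id)) _
    simp_rw [h2]
    rw [lintegral_add_left (hs s).lintegral_prod_right', two_mul]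
    congr 1
    exact lintegral_lintegral_swap ((hs s).comp measurable_swap).aemeasurable
  simp_rw [h1]
  rw [lintegral_const_mul' _ _ (by simp)]
  congr 1
  refine lintegral_lintegral_swap (Measurable.aemeasurable ?_)
  have : Measurable fun p : (β × α) × α => H p.1.1 p.1.2 p.2 :=
    hH.comp (MeasurableEquiv.prodAssoc.measurable)
  exact this.lintegral_prod_right'

theorem lintegral_deriv_schwarzExp_le {ω q D : ℝ → ℝ} {β η : ℝ} (h : WeightBounds ω q β)
    (hq : Measurable q) (hβ : 0 < β) (hη : 0 < η) (hη1 : η < 1) (hβη : 2 * β + 2 * η = 1)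
    (hD : DistanceData D) (hu : IntegrableOn (fun θ => Real.log (ω (D θ))) (Ioc 0 (2 * π))) :
    ∃ C : ℝ, ∫⁻ z in unitDisc, ENNReal.ofReal (1 - Real.log (1 - ‖z‖)) *
        ‖deriv (schwarzExp fun θ => Real.log (ω (D θ))) z‖ₑ ^ 2 ≤
      ENNReal.ofReal C * ∫⁻ θ in Ioc 0 (2 * π),
        ENNReal.ofReal (q (D θ) ^ 2 * D θ ^ (-2 * η) * (2 - Real.log (D θ))) := by
  obtain ⟨C₁, hC₁, hf⟩ := enorm_deriv_schwarzExp_sq_le h hβ hη hβη hD hu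
  obtain ⟨C₂, hC₂, hK⟩ := lintegral_potential_le hη hη1
  set f := schwarzExp fun θ => Real.log (ω (D θ))
  have hmf : Measurable (deriv f) := measurable_deriv f
  have hmc : Measurable cpt := continuous_cpt.measurable
  have hmD : Measurable D := hD.cont.measurable
  set V : ℝ → ENNReal := fun θ => ENNReal.ofReal (q (D θ) ^ 2 * D θ ^ (-η)) with hV
  set H : ℝ → ℝ → ℝ → ENNReal := fun s θ θ' => V θ * ENNReal.ofReal
    (s ^ (-(1 / 2) : ℝ) * (1 - Real.log s) * ((s + ‖cpt θ - cpt θ'‖) ^ (-(1 / 2) : ℝ) *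
      (D θ + (s + ‖cpt θ - cpt θ'‖)) ^ (-1 - η))) with hH
  have hmH : Measurable fun p : ℝ × ℝ × ℝ => H p.1 p.2.1 p.2.2 := by
    simp only [hH, hV]
    fun_prop
  have hpos := hD.pos
  refine ⟨2 * C₁ * C₂, ?_⟩
  have hinner : ∀ s ∈ Ioo (0 : ℝ) 1, ∀ θ, 0 < D θ →
      ENNReal.ofReal (1 - Real.log s) * ‖deriv f (((1 - s : ℝ) : ℂ) * cpt θ)‖ₑ ^ 2 ≤
        ENNReal.ofReal C₁ * ∫⁻ θ' in Ioc 0 (2 * π), H s θ θ' + H s θ' θ := fun s hs θ hθ => by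
    have hs0 := hs.1
    have hL : 0 ≤ 1 - Real.log s := by linarith [Real.log_nonpos hs.1.le hs.2.le]
    calc _ ≤ ENNReal.ofReal (1 - Real.log s) * (ENNReal.ofReal (C₁ * s ^ (-(1 / 2) : ℝ)) *
          ∫⁻ θ' in Ioc 0 (2 * π), ENNReal.ofReal ((s + ‖cpt θ - cpt θ'‖) ^ (-(1 / 2) : ℝ) *
            (incrKernel q η (D θ) (s + ‖cpt θ - cpt θ'‖) +
              incrKernel q η (D θ') (s + ‖cpt θ - cpt θ'‖)))) := by
          gcongr; exact hf s hs θ hθ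
      _ = ENNReal.ofReal C₁ * (ENNReal.ofReal ((1 - Real.log s) * s ^ (-(1 / 2) : ℝ)) *
          ∫⁻ θ' in Ioc 0 (2 * π), ENNReal.ofReal ((s + ‖cpt θ - cpt θ'‖) ^ (-(1 / 2) : ℝ) *
            (incrKernel q η (D θ) (s + ‖cpt θ - cpt θ'‖) +
              incrKernel q η (D θ') (s + ‖cpt θ - cpt θ'‖)))) := by
          rw [ENNReal.ofReal_mul hC₁, ENNReal.ofReal_mul hL]; ring
      _ ≤ _ := by
          gcongr ENNReal.ofReal C₁ * ?_
          rw [← lintegral_const_mul' _ _ ENNReal.ofReal_ne_top]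
          refine lintegral_mono_ae ?_
          filter_upwards [hpos] with θ' hθ'
          simp only [hH, hV]
          have hτ : 0 < s + ‖cpt θ - cpt θ'‖ := by positivity
          rw [norm_sub_rev (cpt θ') (cpt θ)]
          rw [← ENNReal.ofReal_mul (by positivity), ← ENNReal.ofReal_mul (by positivity),
            ← ENNReal.ofReal_mul (by positivity), ← ENNReal.ofReal_add (by positivity)
              (by positivity)]
          refine ENNReal.ofReal_le_ofReal (le_of_eq ?_)
          unfold incrKernel
          ring
  have hlast : ∀ θ, 0 < D θ → ∫⁻ s in Ioo (0 : ℝ) 1, ∫⁻ θ' in Ioc 0 (2 * π), H s θ θ' ≤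
      ENNReal.ofReal C₂ *
        ENNReal.ofReal (q (D θ) ^ 2 * D θ ^ (-2 * η) * (2 - Real.log (D θ))) := fun θ hθ => by
    have hVt : V θ ≠ ⊤ := ENNReal.ofReal_ne_top
    simp only [hH]
    simp_rw [lintegral_const_mul' _ _ hVt]
    calc _ ≤ V θ * ENNReal.ofReal (C₂ * (D θ ^ (-η) * (2 - Real.log (D θ)))) := by
          gcongr; exact hK (D θ) hθ (hD.le_two θ) θ
      _ = _ := by
          have e : D θ ^ (-η) * D θ ^ (-η) = D θ ^ (-2 * η) := by
            rw [← rpow_add hθ]; ring_nf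
          rw [hV, ← ENNReal.ofReal_mul (by positivity), ← ENNReal.ofReal_mul hC₂, ← e]
          congr 1; ring
  rw [lintegral_unitDisc_polar (by fun_prop), lintegral_Ioo_one_sub]
  calc _ ≤ ∫⁻ s in Ioo (0 : ℝ) 1, ∫⁻ θ in Ioc 0 (2 * π),
        ENNReal.ofReal C₁ * ∫⁻ θ' in Ioc 0 (2 * π), H s θ θ' + H s θ' θ := by
        refine setLIntegral_mono' measurableSet_Ioo fun s hs => ?_
        have h1 : ENNReal.ofReal (1 - s) ≤ 1 := ENNReal.ofReal_le_one.2 (by linarith [hs.1])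
        refine (mul_le_of_le_one_left' h1).trans (lintegral_mono_ae ?_)
        filter_upwards [hpos] with θ hθ
        rw [norm_ofReal_mul_cpt (by linarith [hs.2]), sub_sub_cancel]
        exact hinner s hs θ hθ
    _ = ENNReal.ofReal C₁ * (2 * ∫⁻ θ in Ioc 0 (2 * π), ∫⁻ s in Ioo (0 : ℝ) 1,
          ∫⁻ θ' in Ioc 0 (2 * π), H s θ θ') := by
        simp_rw [lintegral_const_mul' _ _ (ENNReal.ofReal_ne_top (r := C₁))]
        rw [lintegral_symm_add hmH]
    _ ≤ ENNReal.ofReal C₁ * (2 * ∫⁻ θ in Ioc 0 (2 * π), ENNReal.ofReal C₂ *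
          ENNReal.ofReal (q (D θ) ^ 2 * D θ ^ (-2 * η) * (2 - Real.log (D θ)))) := by
        gcongr ENNReal.ofReal C₁ * (2 * ?_)
        refine lintegral_mono_ae ?_
        filter_upwards [hpos] with θ hθ
        exact hlast θ hθ
    _ = _ := by
        rw [lintegral_const_mul' _ _ ENNReal.ofReal_ne_top, ENNReal.ofReal_mul (by positivity),
          ENNReal.ofReal_mul (by norm_num), ENNReal.ofReal_ofNat]
        ring

theorem integrableOn_norm_sq_iff {h : ℂ → ℂ} (hm : Measurable h) (s : Set ℂ) :
    IntegrableOn (fun z => ‖h z‖ ^ 2) s ↔ ∫⁻ z in s, ‖h z‖ₑ ^ 2 ≠ ⊤ := by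
  have h1 : AEStronglyMeasurable (fun z => ‖h z‖ ^ 2) (volume.restrict s) :=
    (hm.norm.pow_const 2).aestronglyMeasurable
  rw [IntegrableOn, Integrable, and_iff_right h1, HasFiniteIntegral, lt_top_iff_ne_top]
  simp only [enorm_pow, enorm_norm]

theorem isMultiplierD_of_bounds {f : ℂ → ℂ} (hf : DifferentiableOn ℂ f unitDisc) {K : ℝ}
    (hK : ∀ z ∈ unitDisc, ‖f z‖ ≤ K)
    (hJ : ∫⁻ z in unitDisc, ENNReal.ofReal (1 - Real.log (1 - ‖z‖)) * ‖deriv f z‖ₑ ^ 2 ≠ ⊤) :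
    IsMultiplierD f := by
  rintro g ⟨hg, ⟨M, hM⟩, hgi⟩
  have hopen : IsOpen unitDisc := Metric.isOpen_ball
  have hK0 : 0 ≤ K := (norm_nonneg _).trans (hK 0 (by simp [mem_unitDisc]))
  have hgD := (integrableOn_norm_sq_iff (measurable_deriv g) unitDisc).1 hgi
  obtain ⟨C, hC, hgC⟩ := exists_norm_sq_le_log hg hgD
  refine ⟨hf.mul hg, ⟨K ^ 2 * M, fun r hr => ?_⟩, ?_⟩
  · have hmem : ∀ θ, (r : ℂ) * cpt θ ∈ unitDisc := fun θ => by
      rw [mem_unitDisc, norm_ofReal_mul_cpt hr.1.le]; exact hr.2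
    have hc := continuous_cpt
    have hcf : Continuous fun θ => f ((r : ℂ) * cpt θ) :=
      hf.continuousOn.comp_continuous (by fun_prop) hmem
    have hcg : Continuous fun θ => g ((r : ℂ) * cpt θ) :=
      hg.continuousOn.comp_continuous (by fun_prop) hmem
    have hint : ∀ {k : ℝ → ℝ}, Continuous k → IntegrableOn k (Ioc 0 (2 * π)) := fun hk =>
      hk.integrableOn_Icc.mono_set Ioc_subset_Icc_self
    calc _ ≤ ∫ θ in Ioc 0 (2 * π), K ^ 2 * ‖g ((r : ℂ) * cpt θ)‖ ^ 2 := by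
          refine integral_mono (hint ((hcf.mul hcg).norm.pow 2))
            (hint (continuous_const.mul (hcg.norm.pow 2))) fun θ => ?_
          simp only [norm_mul, mul_pow]
          gcongr
          exact hK _ (hmem θ)
      _ ≤ K ^ 2 * M := by
          rw [integral_const_mul]
          exact mul_le_mul_of_nonneg_left (hM r hr) (by positivity)
  · rw [integrableOn_norm_sq_iff (measurable_deriv _)]
    have hle : ∀ z ∈ unitDisc, ‖deriv (fun z => f z * g z) z‖ₑ ^ 2 ≤
        ENNReal.ofReal (2 * C) *
          (ENNReal.ofReal (1 - Real.log (1 - ‖z‖)) * ‖deriv f z‖ₑ ^ 2) +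
        ENNReal.ofReal (2 * K ^ 2) * ‖deriv g z‖ₑ ^ 2 := fun z hz => by
      have hz1 := mem_unitDisc.1 hz
      have hL : 0 ≤ 1 - Real.log (1 - ‖z‖) := by
        linarith [Real.log_nonpos (x := 1 - ‖z‖) (by linarith) (by linarith [norm_nonneg z])]
      have hfd := hf.differentiableAt (hopen.mem_nhds hz)
      have hgd := hg.differentiableAt (hopen.mem_nhds hz)
      rw [← ofReal_norm, ← ofReal_norm (deriv f z), ← ofReal_norm (deriv g z),
        ← ENNReal.ofReal_pow (norm_nonneg _), ← ENNReal.ofReal_pow (norm_nonneg _),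
        ← ENNReal.ofReal_pow (norm_nonneg _), ← ENNReal.ofReal_mul hL,
        ← ENNReal.ofReal_mul (by positivity), ← ENNReal.ofReal_mul (by positivity),
        ← ENNReal.ofReal_add (by positivity) (by positivity)]
      refine ENNReal.ofReal_le_ofReal ?_
      have h1 : ‖deriv (fun z => f z * g z) z‖ ≤ ‖deriv f z‖ * ‖g z‖ + ‖f z‖ * ‖deriv g z‖ := by
        rw [deriv_fun_mul hfd hgd, ← norm_mul, ← norm_mul]
        exact norm_add_le _ _
      have h2 : (‖deriv f z‖ * ‖g z‖) ^ 2 ≤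
          C * ((1 - Real.log (1 - ‖z‖)) * ‖deriv f z‖ ^ 2) := by
        have := mul_le_mul_of_nonneg_left (hgC z hz) (sq_nonneg ‖deriv f z‖)
        linarith
      have h3 : (‖f z‖ * ‖deriv g z‖) ^ 2 ≤ K ^ 2 * ‖deriv g z‖ ^ 2 := by
        rw [mul_pow]; gcongr; exact hK z hz
      calc _ ≤ (‖deriv f z‖ * ‖g z‖ + ‖f z‖ * ‖deriv g z‖) ^ 2 := by gcongr
        _ ≤ 2 * (‖deriv f z‖ * ‖g z‖) ^ 2 + 2 * (‖f z‖ * ‖deriv g z‖) ^ 2 := by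
          nlinarith [sq_nonneg (‖deriv f z‖ * ‖g z‖ - ‖f z‖ * ‖deriv g z‖)]
        _ ≤ _ := by linarith
    have hm := measurable_deriv f
    refine ne_top_of_le_ne_top ?_ (setLIntegral_mono' hopen.measurableSet hle)
    rw [lintegral_add_left (by fun_prop), lintegral_const_mul' _ _ ENNReal.ofReal_ne_top,
      lintegral_const_mul' _ _ ENNReal.ofReal_ne_top]
    exact ENNReal.add_ne_top.2 ⟨ENNReal.mul_ne_top ENNReal.ofReal_ne_top hJ,
      ENNReal.mul_ne_top ENNReal.ofReal_ne_top hgD⟩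

theorem WeightBounds.energy_density_le {ω : ℝ → ℝ} {β η d : ℝ}
    (h : WeightBounds ω (fun t => deriv ω t * t ^ (1 - β)) β) (hβ : 0 < β) (hη : 0 < η)
    (hβη : 2 * β + 2 * η = 1) (hd : 0 < d) (hd2 : d ≤ 2) :
    (deriv ω d * d ^ (1 - β)) ^ 2 * d ^ (-2 * η) * (2 - Real.log d) ≤
      4 * |d * deriv ω d ^ 2 * Real.log (1 / d)| +
        6 * (deriv ω (1 / 2) * (1 / 2) ^ (1 - β)) ^ 2 := by
  rcases le_total d (1 / 2) with hle | hle
  · have e : (deriv ω d * d ^ (1 - β)) ^ 2 * d ^ (-2 * η) = d * deriv ω d ^ 2 := by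
      have : (d ^ (1 - β)) ^ 2 * d ^ (-2 * η) = d := by
        rw [← rpow_natCast, ← rpow_mul hd.le, ← rpow_add hd]
        conv_rhs => rw [← rpow_one d]
        congr 1; push_cast; linarith
      rw [mul_pow, mul_assoc, this, mul_comm]
    have hl : Real.log d ≤ -Real.log 2 := by
      rw [← Real.log_inv]; exact Real.log_le_log hd (by linarith)
    have hl2 := Real.log_two_gt_d9
    have hw : 0 ≤ d * deriv ω d ^ 2 := by positivity
    rw [e, one_div, Real.log_inv, abs_of_nonneg (mul_nonneg hw (by linarith))]
    have h1 := mul_le_mul_of_nonneg_left (show 2 - Real.log d ≤ 4 * -Real.log d by linarith) hw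
    have h2 := sq_nonneg (deriv ω (1 / 2) * (1 / 2) ^ (1 - β))
    linarith
  · have hπ := pi_gt_three
    have hdm : d ∈ Ioo 0 π := ⟨hd, by linarith⟩
    have hm2 : (1 / 2 : ℝ) ∈ Ioo 0 π := ⟨by norm_num, by linarith⟩
    have hq := h.q_anti hm2 hdm hle
    have hq0 := h.q_nonneg d hdm
    have h1 : d ^ (-2 * η) ≤ 2 := by
      calc d ^ (-2 * η) ≤ (1 / 2 : ℝ) ^ (-2 * η) :=
            rpow_le_rpow_of_nonpos (by norm_num) hle (by linarith)
        _ ≤ (1 / 2 : ℝ) ^ (-1 : ℝ) :=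
            rpow_le_rpow_of_exponent_ge (by norm_num) (by norm_num) (by linarith)
        _ = 2 := by rw [rpow_neg_one]; norm_num
    have h2 : 2 - Real.log d ≤ 3 := by
      have : Real.log (1 / 2) ≤ Real.log d := Real.log_le_log (by norm_num) hle
      rw [one_div, Real.log_inv] at this
      linarith [Real.log_two_lt_d9]
    have h3 : 0 ≤ 2 - Real.log d := by linarith [Real.log_le_sub_one_of_pos hd]
    have h4 := abs_nonneg (d * deriv ω d ^ 2 * Real.log (1 / d))
    calc _ ≤ (deriv ω (1 / 2) * (1 / 2) ^ (1 - β)) ^ 2 * 2 * 3 := by gcongr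
      _ ≤ _ := by linarith

theorem distanceData_dE {E : Set ℂ} (hEc : IsClosed E) (hEsub : E ⊆ circleT)
    (hEz : MeasureZeroOnCircle E) (hne : E.Nonempty) :
    DistanceData fun θ => dE E (cpt θ) where
  cont := (Metric.continuous_infDist_pt E).comp continuous_cpt
  le_two θ := by
    obtain ⟨e, he⟩ := hne
    have h1 : ‖e‖ = 1 := by simpa [circleT] using hEsub he
    calc dE E (cpt θ) ≤ dist (cpt θ) e := Metric.infDist_le_dist_of_mem he
      _ ≤ ‖cpt θ‖ + ‖e‖ := by rw [dist_eq_norm]; exact norm_sub_le _ _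
      _ = 2 := by rw [norm_cpt, h1]; norm_num
  pos := by
    rw [ae_restrict_iff' measurableSet_Ioc, ae_iff]
    refine measure_mono_null (fun θ hθ => ?_) hEz
    simp only [mem_ofPred_eq, Classical.not_imp, dE] at hθ ⊢
    exact ⟨hθ.1, not_not.1 fun hn => hθ.2 ((hEc.notMem_iff_infDist_pos hne).1 hn)⟩
  lip θ θ' := by
    rw [← dist_eq_norm, ← Real.dist_eq]
    simpa [dE] using (Metric.lipschitz_infDist_pt E).dist_le_mul (cpt θ) (cpt θ')

theorem isMultiplierD_outerFun {E : Set ℂ} (hEc : IsClosed E) (hEsub : E ⊆ circleT)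
    (hEz : MeasureZeroOnCircle E) (hne : E.Nonempty) {ω ω' : ℝ → ℝ} {γ : ℝ} (hγ : 2 < γ)
    (hω : OmegaHyp ω ω' γ) (hlog : LogOmegaInt ω E)
    (hint : IntegrableOn (fun θ => dE E (cpt θ) * (ω' (dE E (cpt θ))) ^ 2 *
      Real.log (1 / dE E (cpt θ))) (Ioc 0 (2 * π))) :
    IsMultiplierD (outerFun ω E) := by
  have hD := distanceData_dE hEc hEsub hEz hne
  have hW := hω.weightBounds hγ
  have hβ : 0 < γ⁻¹ := inv_pos.2 (by linarith)
  have hβ2 : γ⁻¹ < 1 / 2 := by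
    rw [one_div]; exact inv_strictAnti₀ (by norm_num) hγ
  set β := γ⁻¹
  obtain ⟨η, hη⟩ : ∃ η, η = (1 - 2 * β) / 2 := ⟨_, rfl⟩
  have hη0 : 0 < η := by linarith
  have hβη : 2 * β + 2 * η = 1 := by linarith
  have hπ := pi_gt_three
  have hout : outerFun ω E = schwarzExp fun θ => Real.log (ω (dE E (cpt θ))) := rfl
  have hm := measurable_deriv ω
  obtain ⟨C, hC⟩ := lintegral_deriv_schwarzExp_le hW (by fun_prop) hβ hη0 (by linarith) hβη hD hlog
  rw [hout]
  refine isMultiplierD_of_bounds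
    (K := max (Real.exp 144 * ω 3) ‖schwarzExp (fun θ => Real.log (ω (dE E (cpt θ)))) 0‖)
    (differentiableOn_schwarzExp hlog) (fun z hz => ?_) (ne_top_of_le_ne_top ?_ hC)
  · rcases eq_or_ne z 0 with rfl | hz0
    · exact le_max_right _ _
    · refine le_max_of_le_left ?_
      have hs : 1 - ‖z‖ ∈ Ioo (0 : ℝ) 1 :=
        ⟨by linarith [mem_unitDisc.1 hz], by linarith [norm_pos_iff.2 hz0]⟩
      have hzz : ((1 - (1 - ‖z‖) : ℝ) : ℂ) * cpt z.arg = z := by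
        rw [sub_sub_cancel, cpt]; exact Complex.norm_mul_exp_arg_mul_I z
      have h0 : 0 ≤ dE E (cpt z.arg) := Metric.infDist_nonneg
      have h1 := norm_schwarzExp_le_weight hW hβ (by linarith) hD hlog hs h0
      rw [hzz] at h1
      refine h1.trans ?_
      gcongr
      have h2 := hD.le_two z.arg
      exact hW.mono ⟨by linarith [hs.1], by linarith [hs.2]⟩ ⟨by norm_num, hπ⟩
        (by linarith [hs.2])
  · refine ENNReal.mul_ne_top ENNReal.ofReal_ne_top ?_
    set B := 6 * (deriv ω (1 / 2) * (1 / 2) ^ (1 - β)) ^ 2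
    have hdom : Integrable (fun θ => 4 * |dE E (cpt θ) * (ω' (dE E (cpt θ))) ^ 2 *
        Real.log (1 / dE E (cpt θ))| + B) (volume.restrict (Ioc 0 (2 * π))) :=
      (hint.abs.const_mul 4).add (integrableOn_const measure_Ioc_lt_top.ne)
    refine ne_top_of_le_ne_top hdom.lintegral_lt_top.ne (lintegral_mono_ae ?_)
    filter_upwards [hD.pos] with θ hθ
    have hdω : deriv ω (dE E (cpt θ)) = ω' (dE E (cpt θ)) :=
      (hω.2.2.2.1 _ ⟨hθ, by linarith [hD.le_two θ]⟩).deriv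
    have h1 := hW.energy_density_le hβ hη0 hβη hθ (hD.le_two θ)
    rw [hdω] at h1
    refine ENNReal.ofReal_le_ofReal ?_
    simpa only [hdω] using h1

theorem isMultiplierD_outerFun_empty (ω : ℝ → ℝ) : IsMultiplierD (outerFun ω ∅) := by
  set c := Real.log (ω 0)
  have hu : IntegrableOn (fun _ : ℝ => c) (Ioc 0 (2 * π)) :=
    integrableOn_const measure_Ioc_lt_top.ne
  have hout : outerFun ω ∅ = schwarzExp fun _ => c := by
    funext z
    simp only [outerFun, dE, Metric.infDist_empty]
    rfl
  rw [hout]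
  refine isMultiplierD_of_bounds (K := Real.exp c) (differentiableOn_schwarzExp hu)
    (fun z hz => ?_) ?_
  · rw [norm_schwarzExp hu c (mem_unitDisc.1 hz)]
    simp
  · have hd : ∀ z ∈ unitDisc, deriv (schwarzExp fun _ => c) z = 0 := fun z hz => by
      rw [(hasDerivAt_schwarzExp hu c (mem_unitDisc.1 hz)).deriv]
      simp
    have hz : ∫⁻ z in unitDisc, ENNReal.ofReal (1 - Real.log (1 - ‖z‖)) *
        ‖deriv (schwarzExp fun _ => c) z‖ₑ ^ 2 = ∫⁻ z in unitDisc, 0 :=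
      setLIntegral_congr_fun measurableSet_ball fun z hz => by simp [hd z hz]
    simp [hz]

theorem omegaHyp_rpow {α : ℝ} (hα : 0 < α) :
    OmegaHyp (fun t => t ^ α) (fun t => α * t ^ (α - 1)) α⁻¹ := by
  refine ⟨(continuous_id.rpow_const fun _ => Or.inr hα.le).continuousOn,
    fun t ht => rpow_pos_of_pos ht.1 α, fun x hx y _ hxy => rpow_le_rpow hx.1.le hxy hα.le,
    fun t ht => Real.hasDerivAt_rpow_const (Or.inl ht.1.ne'), ?_, ?_⟩
  · refine (concaveOn_id (convex_Ioc _ _)).congr fun t ht => ?_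
    simp only [id]
    rw [← rpow_mul ht.1.le, inv_mul_cancel₀ hα.ne', rpow_one]
  · refine monotoneOn_const (c := α) |>.congr fun t ht => ?_
    have h1 : t ^ α ≠ 0 := (rpow_pos_of_pos ht.1 α).ne'
    simp only
    rw [rpow_sub_one ht.1.ne']
    have := ht.1.ne'
    field_simp

theorem isMultiplierD_outerFun_rpow {E : Set ℂ} (hEc : IsClosed E) (hEsub : E ⊆ circleT)
    (hEz : MeasureZeroOnCircle E) (hne : E.Nonempty) {α : ℝ} (hα : α ∈ Ioo (0 : ℝ) (1 / 2))
    (hint : IntegrableOn (fun θ => dE E (cpt θ) ^ (2 * α - 1) * Real.log (1 / dE E (cpt θ)))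
      (Ioc 0 (2 * π))) :
    IsMultiplierD (outerFun (fun t => t ^ α) E) := by
  have hD := distanceData_dE hEc hEsub hEz hne
  have hmD : Measurable fun θ => dE E (cpt θ) := hD.cont.measurable
  have hγ : 2 < α⁻¹ := by
    rw [lt_inv_comm₀ (by norm_num) hα.1, ← one_div]; exact hα.2
  refine isMultiplierD_outerFun hEc hEsub hEz hne hγ (omegaHyp_rpow hα.1) ?_ ?_
  · refine Integrable.mono' (hint.abs.const_mul 2)
      (Real.measurable_log.comp (hmD.pow_const α)).aestronglyMeasurable ?_
    filter_upwards [hD.pos] with θ hθ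
    have h1 : 1 ≤ 2 * dE E (cpt θ) ^ (2 * α - 1) := by
      have h2 : (2 : ℝ) ^ (-1 : ℝ) ≤ dE E (cpt θ) ^ (2 * α - 1) :=
        calc (2 : ℝ) ^ (-1 : ℝ) ≤ 2 ^ (2 * α - 1) :=
              rpow_le_rpow_of_exponent_le (by norm_num) (by linarith [hα.1])
          _ ≤ _ := rpow_le_rpow_of_nonpos hθ (hD.le_two θ) (by linarith [hα.2])
      rw [rpow_neg_one] at h2
      linarith
    have h3 : 0 ≤ dE E (cpt θ) ^ (2 * α - 1) := by positivity
    rw [Real.log_rpow hθ, Real.norm_eq_abs, abs_mul, abs_mul, one_div, Real.log_inv, abs_neg,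
      abs_of_pos hα.1, abs_of_nonneg h3, ← mul_assoc]
    gcongr
    linarith [hα.2]
  · refine (Integrable.const_mul hint (α ^ 2)).congr ?_
    filter_upwards [hD.pos] with θ hθ
    have e : dE E (cpt θ) ^ (2 * α - 1) = dE E (cpt θ) * (dE E (cpt θ) ^ (α - 1)) ^ 2 := by
      rw [← rpow_natCast, ← rpow_mul hθ.le, ← rpow_one_add' hθ.le 
        (ne_of_lt (by push_cast; linarith [hα.2]))]
      congr 1; push_cast; ring
    simp only [e]
    ring

/-- Sufficient integral conditions for `f_{α,E}` (when `E ∈ 𝓛₁`) and `f_{ω,E}`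
(when `E ∈ 𝓛₂`) to be multipliers of `𝒟`. -/
theorem statement15 (E : Set ℂ) (hEc : IsClosed E) (hEsub : E ⊆ circleT)
    (hEz : MeasureZeroOnCircle E)
    (ω ω' : ℝ → ℝ) (γ : ℝ) (hγ : 2 < γ) (hω : OmegaHyp ω ω' γ)
    (hlog : LogOmegaInt ω E) :
    (∀ α : ℝ, α ∈ Set.Ioo (0:ℝ) (1/2) → L1Set E →
      IntegrableOn (fun θ => dE E (cpt θ) ^ (2 * α - 1) * Real.log (1 / dE E (cpt θ)))
        (Set.Ioc 0 (2 * π)) volume →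
      IsMultiplierD (outerFun (fun t => t ^ α) E)) ∧
    (L2Set E →
      IntegrableOn (fun θ => dE E (cpt θ) * (ω' (dE E (cpt θ))) ^ 2 *
          Real.log (1 / dE E (cpt θ))) (Set.Ioc 0 (2 * π)) volume →
      IsMultiplierD (outerFun ω E)) := by
  rcases E.eq_empty_or_nonempty with rfl | hne
  · exact ⟨fun _ _ _ _ => isMultiplierD_outerFun_empty _, fun _ _ => isMultiplierD_outerFun_empty _⟩
  · exact ⟨fun _ hα _ hint => isMultiplierD_outerFun_rpow hEc hEsub hEz hne hα hint,
      fun _ hint => isMultiplierD_outerFun hEc hEsub hEz hne hγ hω hlog hint⟩
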